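/- For every integer r ≥ 1 there exists a positive integer N such that for all n ≥ N, (-1)^(r-1) Δ^r log p(n) > 0, where Δ is the forward difference operator in n and p is the partition function. -/

import Mathlib

open Filter Topology

/-- The generating function `∏ (1 - q ^ k)⁻¹` of the partition numbers. -/
noncomputable def partitionGenFun (q : ℂ) : ℂ := (∏' n : ℕ, (1 - q ^ (n + 1)))⁻¹

section GeneratingFunction
open PowerSeries PowerSeries.WithPiTopology

lemma mk_card_partition_mul_pentagonalSeries :
    (PowerSeries.mk fun n ↦ (Fintype.card (Nat.Partition n) : ℂ)) * pentagonalSeries ℂ = 1 := by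
  have h1 := Nat.Partition.hasProd_powerSeriesMk_card_restricted ℂ (fun _ ↦ True)
  have h2 := hasProd_one_sub_X_pow ℂ
  have h3 := h1.mul h2
  have h4 : (fun i : ℕ ↦ (if True then ∑' j : ℕ, (X : PowerSeries ℂ) ^ ((i + 1) * j) else 1) *
      (1 - X ^ (i + 1))) = fun _ ↦ 1 := by
    ext1 i
    simp only [if_true, pow_mul]
    exact tsum_pow_mul_one_sub_of_constantCoeff_eq_zero (by simp)
  rw [h4] at h3
  have h5 := h3.unique hasProd_one
  rw [← h5]
  congr 1
  ext n
  simp [Nat.Partition.restricted]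

lemma summable_coeff_pentagonalSeries_mul_pow {q : ℂ} (hq : ‖q‖ < 1) :
    Summable fun n ↦ ‖(pentagonalSeries ℂ).coeff n * q ^ n‖ := by
  refine Summable.of_nonneg_of_le (fun _ ↦ norm_nonneg _) (fun n ↦ ?_)
    (summable_geometric_of_lt_one (norm_nonneg q) hq)
  rw [norm_mul, norm_pow]
  refine mul_le_of_le_one_left (by positivity) ?_
  by_cases h : n ∈ Set.range pentagonal
  · obtain ⟨k, rfl⟩ := h
    rw [coeff_pentagonalSeries_pentagonal]
    rcases Int.even_or_odd k with h | h
    · simp [Int.negOnePow_even k h]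
    · simp [Int.negOnePow_odd k h]
  · simp [coeff_pentagonalSeries_eq_zero ℂ h]

lemma hasSum_coeff_pentagonalSeries {q : ℂ} (hq : ‖q‖ < 1) :
    HasSum (fun k : ℕ ↦ (-1) ^ k * (q ^ pentagonal (-k) - q ^ pentagonal (k + 1)))
      (∑' n, (pentagonalSeries ℂ).coeff n * q ^ n) := by
  have h := (summable_coeff_pentagonalSeries_mul_pow hq).of_norm.hasSum
  rw [← pentagonal_injective.hasSum_iff
    (fun n hn ↦ by simp [coeff_pentagonalSeries_eq_zero ℂ hn]),
    ← neg_injective.hasSum_iff (fun x hx ↦ by absurd hx; use -x; simp)] at h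
  convert! h.nat_add_neg_add_one using 2 with k
  simp only [Function.comp_apply, coeff_pentagonalSeries_pentagonal, neg_neg, Int.negOnePow_add]
  simp
  ring

lemma norm_pow_mul_prod_one_sub_pow_le {q : ℂ} (hq : ‖q‖ < 1 / 3) (k n : ℕ) :
    ‖q ^ ((k + 1) * n) * ∏ i ∈ Finset.range (n + 1), (1 - q ^ (k + i + 1))‖ ≤
      2 * (2 / 3 : ℝ) ^ n := by
  have h1 : ‖q ^ ((k + 1) * n)‖ ≤ (1 / 3 : ℝ) ^ n := by
    rw [norm_pow, pow_mul]
    gcongr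
    calc ‖q‖ ^ (k + 1) ≤ ‖q‖ ^ 1 :=
          pow_le_pow_of_le_one (norm_nonneg _) (by linarith) (by omega)
      _ ≤ 1 / 3 := by linarith [pow_one ‖q‖]
  have h2 : ‖∏ i ∈ Finset.range (n + 1), (1 - q ^ (k + i + 1))‖ ≤ (2 : ℝ) ^ (n + 1) := by
    rw [norm_prod]
    calc _ ≤ ∏ i ∈ Finset.range (n + 1), (2 : ℝ) := by
          refine Finset.prod_le_prod (fun _ _ ↦ norm_nonneg _) (fun i _ ↦ ?_)
          refine (norm_sub_le _ _).trans ?_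
          have : ‖q‖ ^ (k + i + 1) ≤ 1 := pow_le_one₀ (norm_nonneg _) (by linarith)
          simp only [norm_one, norm_pow]
          linarith
      _ = _ := by simp
  calc _ ≤ (1 / 3 : ℝ) ^ n * 2 ^ (n + 1) := by
        rw [norm_mul]; gcongr
    _ = _ := by rw [pow_succ, show (2 / 3 : ℝ) = 1 / 3 * 2 by norm_num, mul_pow]; ring

lemma tsum_coeff_pentagonalSeries {q : ℂ} (hq : ‖q‖ < 1 / 3) :
    ∑' n, (pentagonalSeries ℂ).coeff n * q ^ n = ∏' n : ℕ, (1 - q ^ (n + 1)) := by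
  have hq1 : ‖q‖ < 1 := by linarith
  have hg : Summable fun n : ℕ ↦ 2 * (2 / 3 : ℝ) ^ n :=
    (summable_geometric_of_lt_one (by norm_num) (by norm_num)).mul_left 2
  have hs := hasSum_coeff_pentagonalSeries hq1
  rw [← hs.tsum_eq]
  refine (Pentagonal.tprod_one_sub_pow (tendsto_pow_atTop_nhds_zero_of_norm_lt_one hq1)
    (fun k ↦ Summable.of_norm_bounded hg (norm_pow_mul_prod_one_sub_pow_le hq k)) (fun k ↦ ?_)
    hs.summable ?_).symm
  · simp_rw [sub_eq_add_neg]
    refine multipliable_one_add_of_summable ?_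
    simp only [norm_neg, norm_pow, add_assoc]
    exact (summable_nat_add_iff (k + 1)).2 (summable_geometric_of_lt_one (norm_nonneg q) hq1)
  · refine squeeze_zero_norm (a := fun k ↦ ‖q‖ ^ k * ∑' n : ℕ, 2 * (2 / 3 : ℝ) ^ n)
      (fun k ↦ ?_) ?_
    · rw [norm_mul, norm_mul]
      simp only [norm_pow, norm_neg, norm_one, one_pow, one_mul]
      refine mul_le_mul (pow_le_pow_of_le_one (norm_nonneg _) hq1.le ?_)
        (tsum_of_norm_bounded hg.hasSum (norm_pow_mul_prod_one_sub_pow_le hq k))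
        (norm_nonneg _) (by positivity)
      rw [Nat.le_div_iff_mul_le (by norm_num)]
      nlinarith
    · simpa using (tendsto_pow_atTop_nhds_zero_of_lt_one (norm_nonneg q) hq1).mul_const
        (∑' n : ℕ, 2 * (2 / 3 : ℝ) ^ n)

lemma hasSum_card_partition_mul_pow {q : ℂ} (hq : ‖q‖ < 1 / 3) :
    HasSum (fun n ↦ (Fintype.card (Nat.Partition n) : ℂ) * q ^ n) (partitionGenFun q) := by
  have hq1 : ‖q‖ < 1 := by linarith
  have hs : Summable fun n ↦ ‖(Fintype.card (Nat.Partition n) : ℂ) * q ^ n‖ := by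
    refine Summable.of_nonneg_of_le (fun _ ↦ norm_nonneg _) (fun n ↦ ?_)
      (summable_geometric_of_lt_one (r := 2 * ‖q‖) (by positivity) (by linarith))
    rw [norm_mul, norm_pow, mul_pow, Complex.norm_natCast]
    gcongr
    have h1 := Fintype.card_le_of_surjective _ (Nat.Partition.ofComposition_surj (n := n))
    rw [composition_card] at h1
    exact_mod_cast h1.trans (Nat.pow_le_pow_right (by norm_num) (by omega))
  have h := tsum_mul_tsum_eq_tsum_sum_antidiagonal_of_summable_norm hs
    (summable_coeff_pentagonalSeries_mul_pow hq1)
  rw [tsum_coeff_pentagonalSeries hq] at h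
  have h1 : ∀ n : ℕ, ∑ kl ∈ Finset.HasAntidiagonal.antidiagonal n,
      (Fintype.card (Nat.Partition kl.1) : ℂ) * q ^ kl.1 *
        ((pentagonalSeries ℂ).coeff kl.2 * q ^ kl.2) = if n = 0 then 1 else 0 := by
    intro n
    have h2 := congrArg (PowerSeries.coeff n) mk_card_partition_mul_pentagonalSeries
    rw [PowerSeries.coeff_mul, PowerSeries.coeff_one] at h2
    have h3 : (if n = 0 then (1 : ℂ) else 0) = (if n = 0 then (1 : ℂ) else 0) * q ^ n := by
      split_ifs with h0 <;> simp [h0]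
    rw [h3, ← h2, Finset.sum_mul]
    refine Finset.sum_congr rfl fun kl hkl ↦ ?_
    rw [← Finset.HasAntidiagonal.mem_antidiagonal.1 hkl, pow_add, PowerSeries.coeff_mk]
    ring
  simp only [h1, tsum_ite_eq] at h
  rw [partitionGenFun, ← eq_inv_of_mul_eq_one_left h]
  exact hs.of_norm.hasSum

end GeneratingFunction

lemma tprod_one_sub_pow_ne_zero {q : ℂ} (hq : ‖q‖ < 1) : ∏' n : ℕ, (1 - q ^ (n + 1)) ≠ 0 := by
  simp_rw [sub_eq_add_neg]
  refine tprod_one_add_ne_zero_of_summable (fun n h ↦ ?_) ?_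
  · have h1 : q ^ (n + 1) = 1 := by linear_combination -h
    have h2 := congrArg norm h1
    rw [norm_pow, norm_one] at h2
    exact (pow_lt_one₀ (norm_nonneg q) hq (by omega)).ne h2
  · simp only [norm_neg, norm_pow]
    exact (summable_nat_add_iff 1).2 (summable_geometric_of_lt_one (norm_nonneg q) hq)

lemma differentiableOn_partitionGenFun :
    DifferentiableOn ℂ partitionGenFun (Metric.ball 0 1) :=
  ModularForm.differentiableOn_tprod_one_sub_pow.inv
    fun _ hq ↦ tprod_one_sub_pow_ne_zero (by simpa using hq)

lemma card_partition_eq_integral (n : ℕ) {x : ℝ} (hx : 0 < x) :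
    2 * Real.pi * (Fintype.card (Nat.Partition n) : ℂ) =
      ∫ y in -Real.pi..Real.pi, partitionGenFun (Complex.exp (-(x + y * Complex.I))) *
        Complex.exp (n * (x + y * Complex.I)) := by
  obtain ⟨R, hR⟩ : ∃ R : NNReal, (R : ℝ) = Real.exp (-x) :=
    ⟨⟨Real.exp (-x), (Real.exp_pos _).le⟩, rfl⟩
  have hR1 : (R : ℝ) < 1 := by simpa [hR] using hx
  have hR0 : 0 < R := by
    rw [← NNReal.coe_pos, hR]; exact Real.exp_pos _
  have h1 : HasFPowerSeriesAt partitionGenFun (cauchyPowerSeries partitionGenFun 0 R) 0 :=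
    ((differentiableOn_partitionGenFun.mono
      (Metric.closedBall_subset_ball hR1)).hasFPowerSeriesOnBall hR0).hasFPowerSeriesAt
  have h2 : HasFPowerSeriesAt partitionGenFun
      (FormalMultilinearSeries.ofScalars ℂ fun n ↦ (Fintype.card (Nat.Partition n) : ℂ)) 0 := by
    rw [hasFPowerSeriesAt_iff]
    filter_upwards [Metric.ball_mem_nhds (0 : ℂ) (show (0 : ℝ) < 1 / 3 by norm_num)] with q hq
    rw [zero_add]
    convert! hasSum_card_partition_mul_pow (q := q) (by simpa using hq) using 2 with n
    simp [mul_comm]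
  have h3 := congrArg (fun p ↦ p n fun _ ↦ (1 : ℂ)) (h2.eq_formalMultilinearSeries h1)
  simp only [cauchyPowerSeries_apply, FormalMultilinearSeries.ofScalars_apply_eq] at h3
  simp only [one_pow, smul_eq_mul, mul_one, sub_zero] at h3
  rw [h3, circleIntegral]
  have h4 : ∀ θ : ℝ, deriv (circleMap 0 R) θ • ((1 / circleMap 0 R θ) ^ n *
      ((circleMap 0 R θ)⁻¹ * partitionGenFun (circleMap 0 R θ))) =
      Complex.I * (partitionGenFun (Complex.exp (-(x + (-θ : ℝ) * Complex.I))) *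
        Complex.exp (n * (x + (-θ : ℝ) * Complex.I))) := by
    intro θ
    have h5 : circleMap 0 R θ = Complex.exp (-(x + (-θ : ℝ) * Complex.I)) := by
      rw [circleMap, zero_add, hR, Complex.ofReal_exp, ← Complex.exp_add]
      push_cast
      ring_nf
    rw [deriv_circleMap, h5, Complex.exp_nat_mul, one_div, ← Complex.exp_neg, smul_eq_mul, neg_neg]
    have h6 : Complex.exp (-(x + (-θ : ℝ) * Complex.I)) *
        Complex.exp (x + (-θ : ℝ) * Complex.I) = 1 := by
      rw [← Complex.exp_add, neg_add_cancel, Complex.exp_zero]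
    linear_combination (Complex.I * Complex.exp (x + (-θ : ℝ) * Complex.I) ^ n *
      partitionGenFun (Complex.exp (-(x + (-θ : ℝ) * Complex.I)))) * h6
  simp_rw [h4]
  have hper : Function.Periodic (fun θ : ℝ ↦
      Complex.I * (partitionGenFun (Complex.exp (-(x + (-θ : ℝ) * Complex.I))) *
        Complex.exp (n * (x + (-θ : ℝ) * Complex.I)))) (2 * Real.pi) := by
    intro θ
    have e1 : Complex.exp (-(x + (-(θ + 2 * Real.pi) : ℝ) * Complex.I)) =
        Complex.exp (-(x + (-θ : ℝ) * Complex.I)) := by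
      rw [← Complex.exp_periodic (-(x + (-θ : ℝ) * Complex.I))]; push_cast; ring_nf
    have e2 : Complex.exp (n * (x + (-(θ + 2 * Real.pi) : ℝ) * Complex.I)) =
        Complex.exp (n * (x + (-θ : ℝ) * Complex.I)) := by
      rw [← (Complex.exp_periodic.nat_mul n) (n * (x + (-(θ + 2 * Real.pi) : ℝ) * Complex.I))]
      push_cast; ring_nf
    simp only [e1, e2]
  have h7 := hper.intervalIntegral_add_eq 0 (-Real.pi)
  rw [zero_add, show -Real.pi + 2 * Real.pi = Real.pi by ring] at h7
  rw [h7, intervalIntegral.integral_const_mul]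
  have h8 := intervalIntegral.integral_comp_neg (a := -Real.pi) (b := Real.pi)
    (fun y : ℝ ↦ partitionGenFun (Complex.exp (-(x + y * Complex.I))) *
        Complex.exp (n * (x + y * Complex.I)))
  rw [neg_neg] at h8
  rw [h8, ← mul_assoc _ Complex.I, ← mul_assoc]
  have hpi : (Real.pi : ℂ) ≠ 0 := by exact_mod_cast Real.pi_ne_zero
  have h9 : 2 * (Real.pi : ℂ) * ((2 * Real.pi * Complex.I)⁻¹ * Complex.I) = 1 := by
    field_simp
  rw [h9, one_mul]

section ModularTransformation
open Complex

lemma eta_eq_div_partitionGenFun (s : ℂ) :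
    ModularForm.eta (I * s / (2 * Real.pi)) = exp (-s / 24) / partitionGenFun (exp (-s)) := by
  have hpi : (Real.pi : ℂ) ≠ 0 := by exact_mod_cast Real.pi_ne_zero
  have hI : I * I = -1 := I_mul_I
  rw [ModularForm.eta, partitionGenFun, div_inv_eq_mul, Function.Periodic.qParam]
  congr 2
  · push_cast
    field_simp
    linear_combination s * hI
  · ext n
    rw [ModularForm.eta_q_eq_pow]
    congr 3
    field_simp
    linear_combination s * hI

/-- The transformation law of the partition generating function, coming from that of `η`. -/
lemma partitionGenFun_exp_neg {s : ℂ} (hs : 0 < s.re) :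
    partitionGenFun (exp (-s)) = (s / (2 * Real.pi)) ^ (1 / 2 : ℂ) *
      exp (Real.pi ^ 2 / 6 / s - s / 24) * partitionGenFun (exp (-(4 * Real.pi ^ 2 / s))) := by
  have hpi : (Real.pi : ℂ) ≠ 0 := by exact_mod_cast Real.pi_ne_zero
  have hI : I * I = -1 := I_mul_I
  have hs0 : s ≠ 0 := by rintro rfl; simp at hs
  set z : ℂ := I * s / (2 * Real.pi) with hz
  have hzim : 0 < z.im := by
    have : z = ((s.re / (2 * Real.pi) : ℝ) : ℂ) * I - ((s.im / (2 * Real.pi) : ℝ) : ℂ) := by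
      rw [hz]
      conv_lhs => rw [← re_add_im s]
      push_cast
      field_simp
      linear_combination s.im * hI
    rw [this]
    simp only [sub_im, mul_im, ofReal_re, I_im, mul_one, ofReal_im, I_re, mul_zero, add_zero,
      sub_zero]
    positivity
  have h := ModularForm.eta_comp_eq_csqrt_I_inv (show z ∈ UpperHalfPlane.upperHalfPlaneSet from hzim)
  simp only [Function.comp_apply, Pi.smul_apply, Pi.mul_apply, smul_eq_mul] at h
  have h1 : -1 / z = I * (4 * Real.pi ^ 2 / s) / (2 * Real.pi) := by
    rw [hz]; field_simp; linear_combination -4 * hI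
  have hsq : sqrt z = sqrt I * (s / (2 * Real.pi)) ^ (1 / 2 : ℂ) := by
    have harg := abs_arg_lt_pi_div_two_iff.2 (Or.inl hs)
    have e : z = I * (s / (2 * Real.pi)) := by rw [hz]; ring
    have harg2 : (s / (2 * Real.pi)).arg = s.arg := by
      rw [show s / (2 * Real.pi) = ((2 * Real.pi)⁻¹ : ℝ) * s by push_cast; field_simp]
      exact arg_real_mul _ (by positivity)
    have hs1 : s / (2 * Real.pi) ≠ 0 := div_ne_zero hs0 (by simp [hpi])
    have hlog : log (I * (s / (2 * Real.pi))) = log I + log (s / (2 * Real.pi)) := by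
      refine (log_mul_eq_add_log_iff I_ne_zero hs1).2 ?_
      rw [arg_I, harg2]
      rw [abs_lt] at harg
      constructor <;> linarith [Real.pi_pos]
    rw [e, sqrt, sqrt, cpow_def_of_ne_zero (mul_ne_zero I_ne_zero hs1),
      cpow_def_of_ne_zero I_ne_zero, cpow_def_of_ne_zero hs1, hlog, ← exp_add]
    ring_nf
  rw [h1, eta_eq_div_partitionGenFun, hz, eta_eq_div_partitionGenFun, ← hz, hsq] at h
  have hI2 : sqrt I ≠ 0 := by simp [sqrt]
  have n1 : partitionGenFun (exp (-s)) ≠ 0 := inv_ne_zero (tprod_one_sub_pow_ne_zero (by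
    rw [norm_exp]; simpa using hs))
  have n2 : partitionGenFun (exp (-(4 * Real.pi ^ 2 / s))) ≠ 0 :=
    inv_ne_zero (tprod_one_sub_pow_ne_zero (by
      rw [norm_exp, neg_re, Real.exp_lt_one_iff, neg_lt_zero]
      have : (4 * (Real.pi : ℂ) ^ 2 / s) = ((4 * Real.pi ^ 2 : ℝ) : ℂ) * s⁻¹ := by
        push_cast; rfl
      rw [this, re_ofReal_mul, inv_re]
      have := normSq_pos.2 hs0
      positivity))
  have h3 : exp (Real.pi ^ 2 / 6 / s - s / 24) * exp (-(4 * Real.pi ^ 2 / s) / 24) =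
      exp (-s / 24) := by
    rw [← exp_add]; congr 1; field_simp; ring
  rw [inv_mul_eq_div, mul_div_assoc', div_div, eq_div_iff, div_mul_eq_mul_div, div_eq_iff n2,
    ← h3] at h
  · have h4 := exp_ne_zero (-(4 * Real.pi ^ 2 / s) / 24)
    apply mul_left_cancel₀ hI2
    apply mul_left_cancel₀ h4
    linear_combination h
  · exact mul_ne_zero n1 hI2

end ModularTransformation

section GenFunBound
open Complex

lemma summable_pow_mul_div {q : ℂ} (hq : ‖q‖ < 1) :
    Summable (fun x : ℕ × ℕ => (q ^ (x.1 + 1)) ^ (x.2 + 1) / ((x.2 : ℂ) + 1)) := by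
  have hg := summable_geometric_of_lt_one (norm_nonneg q) hq
  have hs : Summable (fun x : ℕ × ℕ => ‖q‖ ^ x.1 * ‖q‖ ^ x.2) :=
    hg.mul_of_nonneg hg (fun _ => by positivity) (fun _ => by positivity)
  refine Summable.of_norm_bounded hs ?_
  rintro ⟨k, m⟩
  have hm : ‖(m : ℂ) + 1‖ = m + 1 := by
    have : ((m : ℂ) + 1) = ((m + 1 : ℝ) : ℂ) := by push_cast; rfl
    rw [this, norm_real, Real.norm_of_nonneg (by positivity)]
  rw [norm_div, norm_pow, norm_pow, hm, ← pow_mul, ← pow_add]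
  calc ‖q‖ ^ ((k + 1) * (m + 1)) / ((m : ℝ) + 1) ≤ ‖q‖ ^ ((k + 1) * (m + 1)) :=
        div_le_self (by positivity) (by linarith [m.cast_nonneg (α := ℝ)])
    _ ≤ ‖q‖ ^ (k + m) := pow_le_pow_of_le_one (norm_nonneg q) hq.le (by nlinarith)

lemma partitionGenFun_eq_exp {q : ℂ} (hq : ‖q‖ < 1) :
    partitionGenFun q = exp (∑' m : ℕ, q ^ (m + 1) / (1 - q ^ (m + 1)) / ((m : ℂ) + 1)) := by
  have hpow : ∀ k : ℕ, ‖q ^ (k + 1)‖ < 1 := fun k => by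
    rw [norm_pow]; exact pow_lt_one₀ (norm_nonneg q) hq (by omega)
  have hS := summable_pow_mul_div hq
  have hlog : ∀ k : ℕ, ∑' m : ℕ, (q ^ (k + 1)) ^ (m + 1) / ((m : ℂ) + 1) =
      -log (1 - q ^ (k + 1)) := fun k => by
    have h := hasSum_taylorSeries_neg_log (hpow k)
    have h2 := (hasSum_nat_add_iff' 1).2 h
    simpa using h2.tsum_eq
  have hgeo : ∀ m : ℕ, ∑' k : ℕ, (q ^ (k + 1)) ^ (m + 1) / ((m : ℂ) + 1) =
      q ^ (m + 1) / (1 - q ^ (m + 1)) / ((m : ℂ) + 1) := fun m => by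
    have : ∀ k : ℕ, (q ^ (k + 1)) ^ (m + 1) / ((m : ℂ) + 1) =
      q ^ (m + 1) / ((m : ℂ) + 1) * (q ^ (m + 1)) ^ k := fun k => by ring
    simp_rw [this]
    rw [tsum_mul_left, tsum_geometric_of_norm_lt_one (hpow m)]
    ring
  have hcomm := Summable.tsum_comm (f := fun k m : ℕ =>
    (q ^ (k + 1)) ^ (m + 1) / ((m : ℂ) + 1)) hS
  simp_rw [hlog, hgeo] at hcomm
  rw [hcomm, tsum_neg, exp_neg, cexp_tsum_eq_tprod, partitionGenFun]
  · intro k h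
    have := hpow k
    rw [sub_eq_zero] at h
    rw [← h] at this
    simp at this
  · have := hS.prod
    simp_rw [hlog] at this
    simpa using this.neg

lemma norm_pow_div_one_sub_pow_le {s : ℂ} (hs : 0 < s.re) (m : ℕ) :
    ‖exp (-s) ^ (m + 1) / (1 - exp (-s) ^ (m + 1)) / ((m : ℂ) + 1)‖ ≤
      1 / ((m : ℝ) + 1) ^ 2 / s.re := by
  have hm : ‖(m : ℂ) + 1‖ = m + 1 := by
    have : ((m : ℂ) + 1) = ((m + 1 : ℝ) : ℂ) := by push_cast; rfl
    rw [this, norm_real, Real.norm_of_nonneg (by positivity)]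
  set t : ℝ := (m + 1) * s.re with ht
  have htpos : 0 < t := by positivity
  have hn : ‖exp (-s) ^ (m + 1)‖ = Real.exp (-t) := by
    rw [norm_pow, norm_exp, ← Real.exp_nat_mul]; simp [ht]
  have hlt : Real.exp (-t) < 1 := by simpa using htpos
  have h1 : 1 - Real.exp (-t) ≤ ‖1 - exp (-s) ^ (m + 1)‖ := by
    have := norm_sub_norm_le 1 (exp (-s) ^ (m + 1))
    rwa [hn, norm_one] at this
  rw [norm_div, norm_div, hn, hm]
  have h2 : Real.exp (-t) / ‖1 - exp (-s) ^ (m + 1)‖ ≤ 1 / t := by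
    rw [div_le_div_iff₀ (by linarith) htpos]
    have h3 : t + 1 ≤ Real.exp t := Real.add_one_le_exp t
    have h4 : Real.exp (-t) * Real.exp t = 1 := by rw [← Real.exp_add]; simp
    have := Real.exp_pos (-t)
    nlinarith
  calc _ ≤ 1 / t / ((m : ℝ) + 1) := by gcongr
    _ = _ := by rw [ht]; field_simp

lemma norm_partitionGenFun_exp_neg_le {s : ℂ} (hs : 0 < s.re) :
    ‖partitionGenFun (exp (-s))‖ ≤
      Real.exp (1 / ‖1 - exp (-s)‖ + (Real.pi ^ 2 / 6 - 1) / s.re) := by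
  have hq : ‖exp (-s)‖ < 1 := by rw [norm_exp]; simpa using hs
  rw [partitionGenFun_eq_exp hq]
  refine (norm_exp_le_exp_norm _).trans (Real.exp_le_exp.2 ?_)
  have hz : HasSum (fun m : ℕ => 1 / ((m : ℝ) + 1) ^ 2) (Real.pi ^ 2 / 6) := by
    have := (hasSum_nat_add_iff' 1).2 hasSum_zeta_two
    simpa using this
  have hz2 : HasSum (fun m : ℕ => 1 / (((m + 1 : ℕ) : ℝ) + 1) ^ 2 / s.re)
      ((Real.pi ^ 2 / 6 - 1) / s.re) := by
    have := ((hasSum_nat_add_iff' 1).2 hz).div_const s.re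
    simpa using this
  have hsum : Summable (fun m : ℕ =>
      exp (-s) ^ (m + 1) / (1 - exp (-s) ^ (m + 1)) / ((m : ℂ) + 1)) :=
    Summable.of_norm_bounded (hz.summable.div_const s.re) (norm_pow_div_one_sub_pow_le hs)
  rw [hsum.tsum_eq_zero_add]
  refine (norm_add_le _ _).trans (add_le_add ?_ ?_)
  · simp only [zero_add, pow_one, Nat.cast_zero, div_one]
    rw [norm_div]
    gcongr
  · exact tsum_of_norm_bounded hz2 fun m => norm_pow_div_one_sub_pow_le hs (m + 1)

lemma exists_norm_partitionGenFun_sub_one_le :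
    ∃ C > 0, ∃ δ > 0, ∀ q : ℂ, ‖q‖ < δ → ‖partitionGenFun q - 1‖ ≤ C * ‖q‖ := by
  have hd : DifferentiableAt ℂ partitionGenFun 0 :=
    differentiableOn_partitionGenFun.differentiableAt (Metric.ball_mem_nhds 0 one_pos)
  have h0 : partitionGenFun 0 = 1 := by simp [partitionGenFun]
  obtain ⟨C, hC, h⟩ := hd.hasFDerivAt.isBigO_sub.exists_pos
  rw [Asymptotics.isBigOWith_iff, Metric.eventually_nhds_iff] at h
  obtain ⟨δ, hδ, h⟩ := h
  exact ⟨C, hC, δ, hδ, fun q hq => by simpa [h0] using h (y := q) (by simpa using hq)⟩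

end GenFunBound

section CircleMethod
open Complex

lemma normSq_one_sub_exp_neg (x y : ℝ) :
    ‖1 - exp (-(x + y * I))‖ ^ 2 = 1 - 2 * Real.exp (-x) * Real.cos y + Real.exp (-x) ^ 2 := by
  have h : exp (-(x + y * I)) = (Real.exp (-x) : ℂ) * exp ((-y : ℝ) * I) := by
    rw [ofReal_exp, ← exp_add]; push_cast; ring_nf
  rw [h, ← normSq_eq_norm_sq, normSq_apply, exp_mul_I, ← ofReal_cos, ← ofReal_sin]
  simp [-ofReal_exp, -ofReal_cos, -ofReal_sin]
  linear_combination Real.exp (-x) ^ 2 * Real.sin_sq_add_cos_sq y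

lemma one_div_norm_one_sub_exp_neg_le {σ y b : ℝ} (hσ : 0 < σ) (hσ1 : σ ≤ 1 / 2) (hb0 : 0 ≤ b)
    (hb : b ^ 2 = 3 / 4 * σ ^ 2) (hy : b ≤ |y|) (hy' : |y| ≤ Real.pi) :
    1 / ‖1 - exp (-((σ / 2 : ℝ) + y * I))‖ ≤ 1 / σ + 2 := by
  set w : ℂ := -((σ / 2 : ℝ) + b * I) with hw
  have hwn : ‖w‖ = σ := by
    rw [← abs_of_pos hσ, ← abs_of_nonneg (norm_nonneg w), ← sq_eq_sq_iff_abs_eq_abs,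
      ← normSq_eq_norm_sq, normSq_apply, hw]
    simp
    linear_combination hb
  have h1 : σ - σ ^ 2 ≤ ‖1 - exp w‖ := by
    have h := norm_exp_sub_one_sub_id_le (x := w) (by linarith)
    have h2 : ‖w‖ ≤ ‖exp w - 1 - w‖ + ‖1 - exp w‖ := by
      calc ‖w‖ = ‖-(exp w - 1 - w) - (1 - exp w)‖ := by congr 1; ring
        _ ≤ _ := by simpa only [norm_neg] using norm_sub_le (-(exp w - 1 - w)) (1 - exp w)
    rw [hwn] at h h2
    linarith
  have h2 : ‖1 - exp w‖ ≤ ‖1 - exp (-((σ / 2 : ℝ) + y * I))‖ := by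
    refine (sq_le_sq₀ (norm_nonneg _) (norm_nonneg _)).1 ?_
    rw [hw, normSq_one_sub_exp_neg, normSq_one_sub_exp_neg]
    have : Real.cos y ≤ Real.cos b := by
      rw [← Real.cos_abs y]
      exact Real.cos_le_cos_of_nonneg_of_le_pi hb0 hy' hy
    have := Real.exp_pos (-(σ / 2))
    nlinarith
  have h3 : 0 < σ - σ ^ 2 := by nlinarith
  calc _ ≤ 1 / (σ - σ ^ 2) := one_div_le_one_div_of_le h3 (h1.trans h2)
    _ ≤ _ := by
      rw [div_le_iff₀ h3]
      field_simp
      nlinarith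

lemma norm_integrand_le_of_le_abs {n : ℕ} {σ y b : ℝ} (hσ : 0 < σ) (hσ1 : σ ≤ 1 / 2)
    (hn : ((n : ℝ) - 1 / 24) * σ ^ 2 = Real.pi ^ 2 / 6) (hb0 : 0 ≤ b)
    (hb : b ^ 2 = 3 / 4 * σ ^ 2) (hy : b ≤ |y|) (hy' : |y| ≤ Real.pi) :
    ‖partitionGenFun (exp (-((σ / 2 : ℝ) + y * I))) * exp (n * ((σ / 2 : ℝ) + y * I))‖ ≤
      Real.exp (19 / 10 * (Real.pi ^ 2 / 6 / σ) + 3) := by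
  have hre : ((σ / 2 : ℝ) + y * I : ℂ).re = σ / 2 := by simp
  have hre' : ((n : ℂ) * ((σ / 2 : ℝ) + y * I) : ℂ).re = n * (σ / 2) := by simp
  have h1 := norm_partitionGenFun_exp_neg_le (s := (σ / 2 : ℝ) + y * I) (by rw [hre]; positivity)
  have h2 := one_div_norm_one_sub_exp_neg_le hσ hσ1 hb0 hb hy hy'
  rw [norm_mul, norm_exp, hre']
  rw [hre] at h1
  refine (mul_le_mul_of_nonneg_right h1 (Real.exp_pos _).le).trans ?_
  rw [← Real.exp_add, Real.exp_le_exp]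
  have hA : Real.pi ^ 2 < 10 := by
    have := Real.pi_lt_d2
    have := Real.pi_pos
    nlinarith
  have h4 : (n : ℝ) * (σ / 2) = Real.pi ^ 2 / 6 / σ / 2 + σ / 48 := by
    field_simp
    linear_combination 288 * hn
  have h5 : (Real.pi ^ 2 / 6 - 1) / (σ / 2) = 2 * (Real.pi ^ 2 / 6 / σ) - 2 * (1 / σ) := by
    field_simp
  have h6 : Real.pi ^ 2 / 6 / σ * (3 / 5) ≤ 1 / σ := by
    rw [div_mul_eq_mul_div]
    gcongr
    linarith
  linarith

lemma exists_norm_integrand_sub_le :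
    ∃ C > 0, ∃ σ₀ > 0, ∀ (n : ℕ) (σ y b : ℝ), 0 < σ → σ ≤ 1 / 2 → σ ≤ σ₀ →
    ((n : ℝ) - 1 / 24) * σ ^ 2 = Real.pi ^ 2 / 6 → b ^ 2 = 3 / 4 * σ ^ 2 → |y| ≤ b →
    ‖partitionGenFun (exp (-((σ / 2 : ℝ) + y * I))) * exp (n * ((σ / 2 : ℝ) + y * I)) -
      (((σ / 2 : ℝ) + y * I) / (2 * Real.pi)) ^ (1 / 2 : ℂ) *
        exp ((Real.pi ^ 2 / 6 : ℝ) / ((σ / 2 : ℝ) + y * I) +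
          ((n : ℝ) - 1 / 24 : ℝ) * ((σ / 2 : ℝ) + y * I))‖ ≤
      C * Real.exp (19 / 10 * (Real.pi ^ 2 / 6 / σ) + 3) := by
  obtain ⟨C, hC, δ, hδ, h⟩ := exists_norm_partitionGenFun_sub_one_le
  have hlim : Tendsto (fun σ : ℝ => Real.exp (-(2 * Real.pi ^ 2) * σ⁻¹)) (𝓝[>] 0) (𝓝 0) := by
    refine Real.tendsto_exp_atBot.comp ?_
    exact tendsto_inv_nhdsGT_zero.const_mul_atTop_of_neg (by have := Real.pi_pos; nlinarith)
  have hev := hlim.eventually (gt_mem_nhds hδ)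
  obtain ⟨σ₀, hσ₀, hlt⟩ := (mem_nhdsGT_iff_exists_Ioc_subset).1 hev
  refine ⟨C, hC, σ₀, hσ₀, ?_⟩
  intro n σ y b hσ hσ1 hσσ hn hb hy
  have hpi := Real.pi_pos
  have hre : ((σ / 2 : ℝ) + y * I : ℂ).re = σ / 2 := by simp
  have him : ((σ / 2 : ℝ) + y * I : ℂ).im = y := by simp
  set s : ℂ := (σ / 2 : ℝ) + y * I with hs
  have hy2 : y ^ 2 ≤ 3 / 4 * σ ^ 2 := by
    rw [← hb, ← sq_abs y]; gcongr
  have hsq : normSq s ≤ σ ^ 2 := by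
    rw [normSq_apply, hre, him]; nlinarith
  have hs0 : 0 < normSq s := by
    rw [normSq_apply, hre, him]; nlinarith [sq_nonneg y]
  have hinv : 1 / (2 * σ) ≤ (s⁻¹).re := by
    rw [inv_re, hre, div_le_div_iff₀ (by positivity) hs0]
    nlinarith
  have hq : ‖exp (-(4 * Real.pi ^ 2 / s))‖ = Real.exp (-(4 * Real.pi ^ 2) * (s⁻¹).re) := by
    rw [norm_exp]
    have : (-(4 * (Real.pi : ℂ) ^ 2 / s)) = ((-(4 * Real.pi ^ 2) : ℝ) : ℂ) * s⁻¹ := by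
      push_cast; ring
    rw [this, re_ofReal_mul]
  have hqδ : ‖exp (-(4 * Real.pi ^ 2 / s))‖ < δ := by
    have h1 : Real.exp (-(2 * Real.pi ^ 2) * σ⁻¹) < δ := hlt ⟨hσ, hσσ⟩
    refine lt_of_le_of_lt ?_ h1
    rw [hq, Real.exp_le_exp]
    have : 4 * Real.pi ^ 2 * (1 / (2 * σ)) ≤ 4 * Real.pi ^ 2 * (s⁻¹).re := by gcongr
    have h3 : 4 * Real.pi ^ 2 * (1 / (2 * σ)) = 2 * Real.pi ^ 2 * σ⁻¹ := by field_simp; norm_num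
    linarith
  have hfac : partitionGenFun (exp (-s)) * exp (n * s) -
      (s / (2 * Real.pi)) ^ (1 / 2 : ℂ) *
        exp ((Real.pi ^ 2 / 6 : ℝ) / s + ((n : ℝ) - 1 / 24 : ℝ) * s) =
      (s / (2 * Real.pi)) ^ (1 / 2 : ℂ) *
        exp ((Real.pi ^ 2 / 6 : ℝ) / s + ((n : ℝ) - 1 / 24 : ℝ) * s) *
        (partitionGenFun (exp (-(4 * Real.pi ^ 2 / s))) - 1) := by
    rw [partitionGenFun_exp_neg (by rw [hre]; positivity)]
    have : exp (Real.pi ^ 2 / 6 / s - s / 24) * exp (n * s) =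
        exp ((Real.pi ^ 2 / 6 : ℝ) / s + ((n : ℝ) - 1 / 24 : ℝ) * s) := by
      rw [← exp_add]; push_cast; ring_nf
    rw [← this]; ring
  have hroot : ‖(s / (2 * Real.pi)) ^ (1 / 2 : ℂ)‖ ≤ 1 := by
    have h1 : ‖s / (2 * Real.pi)‖ ≤ 1 := by
      rw [norm_div, div_le_one (by simp [hpi.ne'])]
      have h2 : ‖s‖ ≤ σ := by
        rw [← sq_le_sq₀ (norm_nonneg _) hσ.le, ← normSq_eq_norm_sq]; exact hsq
      have h3 : ‖(2 * Real.pi : ℂ)‖ = 2 * Real.pi := by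
        simp [abs_of_pos hpi]
      rw [h3]
      linarith [Real.pi_gt_three]
    have h2 : (1 / 2 : ℂ) = ((1 / 2 : ℝ) : ℂ) := by push_cast; rfl
    rw [h2, norm_cpow_real]
    exact Real.rpow_le_one (norm_nonneg _) h1 (by norm_num)
  have hexp : ‖exp ((Real.pi ^ 2 / 6 : ℝ) / s + ((n : ℝ) - 1 / 24 : ℝ) * s)‖ =
      Real.exp (Real.pi ^ 2 / 6 * (s⁻¹).re + Real.pi ^ 2 / 6 / σ / 2) := by
    rw [norm_exp, add_re, div_eq_mul_inv, re_ofReal_mul, re_ofReal_mul, hre]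
    congr 2
    field_simp
    linear_combination 144 * hn
  rw [hfac, norm_mul, norm_mul, hexp]
  have h7 := h _ hqδ
  rw [hq] at h7
  calc _ ≤ 1 * Real.exp (Real.pi ^ 2 / 6 * (s⁻¹).re + Real.pi ^ 2 / 6 / σ / 2) *
        (C * Real.exp (-(4 * Real.pi ^ 2) * (s⁻¹).re)) := by gcongr
    _ = C * Real.exp (Real.pi ^ 2 / 6 * (s⁻¹).re + Real.pi ^ 2 / 6 / σ / 2 +
        -(4 * Real.pi ^ 2) * (s⁻¹).re) := by
      rw [Real.exp_add (_ + _) _]; ring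
    _ ≤ _ := by
      have h8 : 0 ≤ (s⁻¹).re := le_trans (by positivity) hinv
      have h9 : 0 ≤ Real.pi ^ 2 * (s⁻¹).re := by positivity
      have h10 : 0 ≤ Real.pi ^ 2 / 6 / σ := by positivity
      refine mul_le_mul_of_nonneg_left (Real.exp_le_exp.2 ?_) hC.le
      linarith

lemma continuous_partitionGenFun_exp_neg (n : ℕ) {x : ℝ} (hx : 0 < x) :
    Continuous fun y : ℝ =>
      partitionGenFun (exp (-((x : ℂ) + y * I))) * exp (n * ((x : ℂ) + y * I)) := by
  refine Continuous.mul ?_ (by fun_prop)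
  refine differentiableOn_partitionGenFun.continuousOn.comp_continuous (by fun_prop) fun y => ?_
  simpa [norm_exp] using hx

lemma continuous_cpow_mul_exp_div_add {x : ℝ} (hx : 0 < x) (A N : ℝ) :
    Continuous fun y : ℝ => (((x : ℂ) + y * I) / (2 * Real.pi)) ^ (1 / 2 : ℂ) *
      exp ((A : ℂ) / ((x : ℂ) + y * I) + (N : ℂ) * ((x : ℂ) + y * I)) := by
  have h0 : ∀ y : ℝ, ((x : ℂ) + y * I) ≠ 0 := fun y h => by
    have := congrArg re h
    simp at this
    linarith
  refine Continuous.mul ?_ ?_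
  · refine Continuous.cpow (by fun_prop) (by fun_prop) fun y => ?_
    left
    have : ((x : ℂ) + y * I) / (2 * Real.pi) = ((2 * Real.pi)⁻¹ : ℝ) * ((x : ℂ) + y * I) := by
      push_cast; ring
    rw [this, re_ofReal_mul]
    have := Real.pi_pos
    simp
    positivity
  · refine continuous_exp.comp (Continuous.add ?_ (by fun_prop))
    exact Continuous.div (by fun_prop) (by fun_prop) h0

lemma exists_norm_card_partition_sub_integral_le :
    ∃ C > 0, ∃ σ₀ > 0, ∀ (n : ℕ) (σ b : ℝ), 0 < σ → σ ≤ σ₀ →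
    ((n : ℝ) - 1 / 24) * σ ^ 2 = Real.pi ^ 2 / 6 → 0 ≤ b → b ^ 2 = 3 / 4 * σ ^ 2 →
    ‖2 * Real.pi * (Fintype.card (Nat.Partition n) : ℂ) -
      ∫ y in -b..b, (((σ / 2 : ℝ) + y * I) / (2 * Real.pi)) ^ (1 / 2 : ℂ) *
        exp ((Real.pi ^ 2 / 6 : ℝ) / ((σ / 2 : ℝ) + y * I) +
          ((n : ℝ) - 1 / 24 : ℝ) * ((σ / 2 : ℝ) + y * I))‖ ≤
      C * Real.exp (19 / 10 * (Real.pi ^ 2 / 6 / σ)) := by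
  obtain ⟨C, hC, σ₀, hσ₀, h⟩ := exists_norm_integrand_sub_le
  refine ⟨(2 * Real.pi + C) * Real.exp 3, by positivity, min σ₀ (1 / 2), by positivity, ?_⟩
  intro n σ b hσ hσ1 hn hb0 hb
  have hσa : σ ≤ σ₀ := hσ1.trans (min_le_left _ _)
  have hσb : σ ≤ 1 / 2 := hσ1.trans (min_le_right _ _)
  have hpi := Real.pi_gt_three
  have hb1 : b ≤ 1 / 2 := by nlinarith
  set P : ℝ → ℂ := fun y =>
    partitionGenFun (exp (-((σ / 2 : ℝ) + y * I))) * exp (n * ((σ / 2 : ℝ) + y * I)) with hP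
  set F : ℝ → ℂ := fun y => (((σ / 2 : ℝ) + y * I) / (2 * Real.pi)) ^ (1 / 2 : ℂ) *
        exp ((Real.pi ^ 2 / 6 : ℝ) / ((σ / 2 : ℝ) + y * I) +
          ((n : ℝ) - 1 / 24 : ℝ) * ((σ / 2 : ℝ) + y * I)) with hF
  have hPc : Continuous P := continuous_partitionGenFun_exp_neg n (half_pos hσ)
  have hFc : Continuous F := continuous_cpow_mul_exp_div_add (half_pos hσ) _ _
  have hPi := fun u v : ℝ => hPc.intervalIntegrable (μ := MeasureTheory.volume) u v
  have hFi := fun u v : ℝ => hFc.intervalIntegrable (μ := MeasureTheory.volume) u v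
  set E := Real.exp (19 / 10 * (Real.pi ^ 2 / 6 / σ) + 3) with hE
  rw [card_partition_eq_integral n (half_pos hσ)]
  have hsplit : (∫ y in -Real.pi..Real.pi, P y) - ∫ y in -b..b, F y =
      (∫ y in -Real.pi..(-b), P y) + (∫ y in b..Real.pi, P y) + ∫ y in -b..b, (P y - F y) := by
    rw [intervalIntegral.integral_sub (hPi _ _) (hFi _ _),
      ← intervalIntegral.integral_add_adjacent_intervals (hPi (-Real.pi) (-b)) (hPi (-b) Real.pi),
      ← intervalIntegral.integral_add_adjacent_intervals (hPi (-b) b) (hPi b Real.pi)]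
    ring
  have e1 : ‖∫ y in -Real.pi..(-b), P y‖ ≤ E * |-b - -Real.pi| := by
    refine intervalIntegral.norm_integral_le_of_norm_le_const fun y hy => ?_
    rw [Set.uIoc_of_le (by linarith)] at hy
    have : |y| = -y := abs_of_nonpos (by linarith [hy.2])
    exact norm_integrand_le_of_le_abs hσ hσb hn hb0 hb (by linarith [hy.2]) (by linarith [hy.1])
  have e2 : ‖∫ y in b..Real.pi, P y‖ ≤ E * |Real.pi - b| := by
    refine intervalIntegral.norm_integral_le_of_norm_le_const fun y hy => ?_
    rw [Set.uIoc_of_le (by linarith)] at hy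
    have : |y| = y := abs_of_nonneg (by linarith [hy.1])
    exact norm_integrand_le_of_le_abs hσ hσb hn hb0 hb (by linarith [hy.1]) (by linarith [hy.2])
  have e3 : ‖∫ y in -b..b, (P y - F y)‖ ≤ C * E * |b - -b| := by
    refine intervalIntegral.norm_integral_le_of_norm_le_const fun y hy => ?_
    rw [Set.uIoc_of_le (by linarith)] at hy
    exact h n σ y b hσ hσb hσa hn hb (abs_le.2 ⟨hy.1.le, hy.2⟩)
  rw [abs_of_nonneg (by linarith)] at e1 e2 e3
  have hE0 : 0 < E := Real.exp_pos _
  have hEq : E = Real.exp 3 * Real.exp (19 / 10 * (Real.pi ^ 2 / 6 / σ)) := by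
    rw [hE, Real.exp_add]; ring
  rw [hsplit]
  calc _ ≤ E * (-b - -Real.pi) + E * (Real.pi - b) + C * E * (b - -b) :=
        (norm_add₃_le).trans (by gcongr)
    _ ≤ (2 * Real.pi + C) * E := by nlinarith [mul_pos hC hE0]
    _ = _ := by rw [hEq]; ring

end CircleMethod

section SaddlePoint
open Complex

lemma ofReal_mul_cpow_half {r : ℝ} (hr : 0 < r) {z : ℂ} (hz : z ≠ 0) :
    ((r : ℂ) * z) ^ (1 / 2 : ℂ) = (√r : ℝ) * z ^ (1 / 2 : ℂ) := by
  have hr' : (r : ℂ) ≠ 0 := by exact_mod_cast hr.ne'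
  rw [cpow_def_of_ne_zero (mul_ne_zero hr' hz), cpow_def_of_ne_zero hz, log_ofReal_mul hr hz,
    Real.sqrt_eq_rpow, Real.rpow_def_of_pos hr, add_mul, exp_add]
  push_cast
  rfl

lemma integral_segment_eq_integral_arc (f : ℂ → ℂ)
    (hf : DifferentiableOn ℂ f (Metric.ball 2 2)) :
    ∫ t in -(√3 / 2)..(√3 / 2), f ((1 / 2 : ℝ) + (t : ℝ) * I) =
      ∫ ψ in -(Real.pi / 6)..(Real.pi / 6), 2 * exp (2 * (ψ : ℝ) * I) * f (exp (2 * (ψ : ℝ) * I)) := by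
  have h3 : √3 ^ 2 = 3 := Real.sq_sqrt (by norm_num)
  obtain ⟨g, hg⟩ := hf.isExactOn_ball
  have hseg : ∀ t ∈ Set.uIcc (-(√3 / 2)) (√3 / 2),
      ((1 / 2 : ℝ) + (t : ℝ) * I : ℂ) ∈ Metric.ball (2 : ℂ) 2 := by
    intro t ht
    rw [Set.uIcc_of_le (by linarith [Real.sqrt_nonneg 3])] at ht
    rw [mem_ball_iff_norm, ← sq_lt_sq₀ (norm_nonneg _) (by norm_num), ← normSq_eq_norm_sq,
      normSq_apply]
    simp
    have : t ^ 2 ≤ (√3 / 2) ^ 2 := sq_le_sq' ht.1 ht.2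
    nlinarith
  have harc : ∀ ψ ∈ Set.uIcc (-(Real.pi / 6)) (Real.pi / 6),
      exp (2 * (ψ : ℝ) * I) ∈ Metric.ball (2 : ℂ) 2 := by
    intro ψ hψ
    rw [Set.uIcc_of_le (by linarith [Real.pi_pos])] at hψ
    have h1 : exp (2 * (ψ : ℝ) * I) = Real.cos (2 * ψ) + Real.sin (2 * ψ) * I := by
      rw [exp_mul_I]; push_cast; rfl
    have h2 : 1 / 2 ≤ Real.cos (2 * ψ) := by
      rw [← Real.cos_pi_div_three, ← Real.cos_abs (2 * ψ)]
      refine Real.cos_le_cos_of_nonneg_of_le_pi (abs_nonneg _) (by linarith [Real.pi_pos]) ?_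
      rw [abs_le]; constructor <;> linarith [hψ.1, hψ.2]
    rw [mem_ball_iff_norm, ← sq_lt_sq₀ (norm_nonneg _) (by norm_num), ← normSq_eq_norm_sq,
      normSq_apply, h1]
    simp only [sub_re, add_re, ofReal_re, mul_re, ofReal_im, I_re, I_im, sub_im, add_im, mul_im,
      re_ofNat, im_ofNat]
    nlinarith [Real.sin_sq_add_cos_sq (2 * ψ)]
  have d1 : ∀ t ∈ Set.uIcc (-(√3 / 2)) (√3 / 2),
      HasDerivAt (fun t : ℝ => g ((1 / 2 : ℝ) + (t : ℝ) * I))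
        (f ((1 / 2 : ℝ) + (t : ℝ) * I) * I) t := by
    intro t ht
    refine HasDerivAt.comp t (hg _ (hseg t ht)) ?_
    simpa using ((hasDerivAt_id t).ofReal_comp.mul_const I).const_add ((1 / 2 : ℝ) : ℂ)
  have d2 : ∀ ψ ∈ Set.uIcc (-(Real.pi / 6)) (Real.pi / 6),
      HasDerivAt (fun ψ : ℝ => g (exp (2 * (ψ : ℝ) * I)))
        (f (exp (2 * (ψ : ℝ) * I)) * (exp (2 * (ψ : ℝ) * I) * (2 * I))) ψ := by
    intro ψ hψ
    refine HasDerivAt.comp ψ (hg _ (harc ψ hψ)) ?_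
    have := (((hasDerivAt_id ψ).ofReal_comp.const_mul (2 : ℂ)).mul_const I).cexp
    simpa using this
  have c1 : ContinuousOn (fun t : ℝ => f ((1 / 2 : ℝ) + (t : ℝ) * I))
      (Set.uIcc (-(√3 / 2)) (√3 / 2)) :=
    hf.continuousOn.comp (by fun_prop) hseg
  have c2 : ContinuousOn (fun ψ : ℝ => f (exp (2 * (ψ : ℝ) * I)))
      (Set.uIcc (-(Real.pi / 6)) (Real.pi / 6)) :=
    hf.continuousOn.comp (by fun_prop) harc
  have i1 := intervalIntegral.integral_eq_sub_of_hasDerivAt d1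
    (c1.mul continuousOn_const).intervalIntegrable
  have i2 := intervalIntegral.integral_eq_sub_of_hasDerivAt d2
    (c2.mul (by fun_prop)).intervalIntegrable
  have p1 : ((1 / 2 : ℝ) + ((√3 / 2 : ℝ) : ℝ) * I : ℂ) = exp (2 * (Real.pi / 6 : ℝ) * I) := by
    have : (2 * (Real.pi / 6 : ℝ) : ℂ) = (Real.pi / 3 : ℝ) := by push_cast; ring
    rw [this, exp_mul_I, ← ofReal_cos, ← ofReal_sin, Real.cos_pi_div_three, Real.sin_pi_div_three]
  have p2 : ((1 / 2 : ℝ) + ((-(√3 / 2) : ℝ) : ℝ) * I : ℂ) =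
      exp (2 * (-(Real.pi / 6) : ℝ) * I) := by
    have : (2 * (-(Real.pi / 6) : ℝ) : ℂ) = (-(Real.pi / 3) : ℝ) := by push_cast; ring
    rw [this, exp_mul_I, ← ofReal_cos, ← ofReal_sin, Real.cos_neg, Real.sin_neg,
      Real.cos_pi_div_three, Real.sin_pi_div_three]
  rw [p1, p2, ← i2] at i1
  rw [intervalIntegral.integral_mul_const] at i1
  apply mul_right_cancel₀ I_ne_zero
  rw [i1, ← intervalIntegral.integral_mul_const]
  congr 1
  ext ψ
  ring

lemma re_integral_segment_eq (L : ℝ) :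
    (∫ t in -(√3 / 2)..(√3 / 2), ((1 / 2 : ℝ) + (t : ℝ) * I : ℂ) ^ (1 / 2 : ℂ) *
        exp (L * (((1 / 2 : ℝ) + (t : ℝ) * I : ℂ)⁻¹ + ((1 / 2 : ℝ) + (t : ℝ) * I)))).re =
      2 * Real.exp (2 * L) *
        ∫ w in -(1 / 2 : ℝ)..(1 / 2), (1 - 4 * w ^ 2) * Real.exp (-(4 * L) * w ^ 2) := by
  have hpi := Real.pi_pos
  have hre : ∀ z ∈ Metric.ball (2 : ℂ) 2, 0 < z.re := by
    intro z hz
    rw [mem_ball_iff_norm] at hz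
    have := (abs_re_le_norm (z - 2)).trans_lt hz
    rw [abs_lt] at this
    simp at this
    linarith
  rw [integral_segment_eq_integral_arc (fun z => z ^ (1 / 2 : ℂ) * exp (L * (z⁻¹ + z)))]
  swap
  · intro z hz
    have h1 := hre z hz
    have h0 : z ≠ 0 := fun h => by simp [h] at h1
    have hsl : z ∈ slitPlane := Or.inl h1
    refine DifferentiableAt.differentiableWithinAt ?_
    refine DifferentiableAt.mul (differentiableAt_id.cpow (by fun_prop) hsl) ?_
    exact (((differentiableAt_inv h0).add differentiableAt_id).const_mul _).cexp
  have hpt : ∀ ψ ∈ Set.uIcc (-(Real.pi / 6)) (Real.pi / 6),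
      2 * exp (2 * (ψ : ℝ) * I) * (exp (2 * (ψ : ℝ) * I) ^ (1 / 2 : ℂ) *
        exp (L * ((exp (2 * (ψ : ℝ) * I))⁻¹ + exp (2 * (ψ : ℝ) * I)))) =
      2 * exp ((3 * ψ : ℝ) * I) * (Real.exp (2 * L * Real.cos (2 * ψ)) : ℝ) := by
    intro ψ hψ
    rw [Set.uIcc_of_le (by linarith)] at hψ
    have hlog : log (exp (2 * (ψ : ℝ) * I)) = 2 * (ψ : ℝ) * I := by
      apply log_exp
      · simp; linarith [hψ.1]
      · simp; linarith [hψ.2]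
    have hcos : (exp (2 * (ψ : ℝ) * I))⁻¹ + exp (2 * (ψ : ℝ) * I) = 2 * cos (2 * ψ) := by
      rw [← exp_neg, two_cos]; ring_nf
    rw [hcos, cpow_def_of_ne_zero (exp_ne_zero _), hlog, mul_assoc, mul_assoc, ← mul_assoc (exp _),
      ← exp_add]
    push_cast
    ring_nf
  rw [intervalIntegral.integral_congr hpt]
  have hre2 := Complex.reCLM.intervalIntegral_comp_comm (μ := MeasureTheory.volume)
    (a := -(Real.pi / 6)) (b := Real.pi / 6)
    (f := fun ψ : ℝ => 2 * exp ((3 * ψ : ℝ) * I) * (Real.exp (2 * L * Real.cos (2 * ψ)) : ℝ))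
    (Continuous.intervalIntegrable (by fun_prop) _ _)
  simp only [reCLM_apply] at hre2
  rw [← hre2]
  have hreal : ∀ ψ : ℝ, (2 * exp ((3 * ψ : ℝ) * I) *
      (Real.exp (2 * L * Real.cos (2 * ψ)) : ℝ)).re = 2 * Real.exp (2 * L) *
      (((fun w : ℝ => (1 - 4 * w ^ 2) * Real.exp (-(4 * L) * w ^ 2)) ∘ Real.sin) ψ *
        Real.cos ψ) := by
    intro ψ
    have h1 : (2 * exp ((3 * ψ : ℝ) * I) * (Real.exp (2 * L * Real.cos (2 * ψ)) : ℝ)).re =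
        2 * Real.cos (3 * ψ) * Real.exp (2 * L * Real.cos (2 * ψ)) := by
      rw [re_mul_ofReal, mul_re, exp_ofReal_mul_I_re]
      simp
    have h2 : Real.exp (2 * L * Real.cos (2 * ψ)) =
        Real.exp (2 * L) * Real.exp (-(4 * L) * Real.sin ψ ^ 2) := by
      rw [← Real.exp_add, Real.cos_two_mul, Real.cos_sq']; ring_nf
    rw [h1, h2, Real.cos_three_mul]
    simp only [Function.comp]
    have h3 := Real.cos_sq' ψ
    have h4 : 4 * Real.cos ψ ^ 3 - 3 * Real.cos ψ = (1 - 4 * Real.sin ψ ^ 2) * Real.cos ψ := by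
      linear_combination 4 * Real.cos ψ * h3
    rw [h4]; ring
  simp_rw [hreal]
  rw [intervalIntegral.integral_const_mul,
    intervalIntegral.integral_comp_mul_deriv (fun x _ => Real.hasDerivAt_sin x) (by fun_prop)
      (by fun_prop), Real.sin_neg, Real.sin_pi_div_six]

end SaddlePoint

section Gaussian

lemma abs_integral_exp_sub_sqrt_le {L : ℝ} (hL : 1 ≤ L) :
    |(∫ w in -(1 / 2 : ℝ)..(1 / 2), Real.exp (-(4 * L) * w ^ 2)) - √(Real.pi / (4 * L))| ≤
      Real.exp (1 - L) := by
  have hi : MeasureTheory.Integrable (fun w : ℝ => Real.exp (-(4 * L) * w ^ 2)) :=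
    integrable_exp_neg_mul_sq (by linarith)
  have hi4 : MeasureTheory.Integrable (fun w : ℝ => Real.exp (1 - L) * Real.exp (-4 * w ^ 2)) :=
    (integrable_exp_neg_mul_sq (by norm_num)).const_mul _
  set S : Set ℝ := Set.Ioc (-(1 / 2 : ℝ)) (1 / 2)
  have hS : MeasurableSet S := measurableSet_Ioc
  have h := MeasureTheory.integral_add_compl hS hi
  rw [integral_gaussian] at h
  rw [intervalIntegral.integral_of_le (by norm_num), ← h, sub_add_cancel_left, abs_neg, abs_of_nonneg
    (MeasureTheory.integral_nonneg fun _ => (Real.exp_pos _).le)]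
  calc ∫ w in Sᶜ, Real.exp (-(4 * L) * w ^ 2)
      ≤ ∫ w in Sᶜ, Real.exp (1 - L) * Real.exp (-4 * w ^ 2) := by
        refine MeasureTheory.setIntegral_mono_on hi.integrableOn hi4.integrableOn hS.compl ?_
        intro w hw
        rw [← Real.exp_add, Real.exp_le_exp]
        have hw2 : 1 / 4 ≤ w ^ 2 := by
          by_contra! hlt
          have := abs_lt_of_sq_lt_sq (a := w) (b := 1 / 2) (by norm_num; linarith) (by norm_num)
          rw [abs_lt] at this
          exact hw ⟨this.1, this.2.le⟩
        nlinarith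
    _ ≤ ∫ w, Real.exp (1 - L) * Real.exp (-4 * w ^ 2) :=
        MeasureTheory.setIntegral_le_integral hi4 (MeasureTheory.ae_of_all _ fun _ => by positivity)
    _ = Real.exp (1 - L) * √(Real.pi / 4) := by
        rw [MeasureTheory.integral_const_mul, integral_gaussian]
    _ ≤ Real.exp (1 - L) * 1 := by
        gcongr
        rw [Real.sqrt_le_one]
        linarith [Real.pi_lt_four]
    _ = _ := mul_one _

lemma integral_one_sub_mul_exp_eq {L : ℝ} (hL : 0 < L) :
    ∫ w in -(1 / 2 : ℝ)..(1 / 2), (1 - 4 * w ^ 2) * Real.exp (-(4 * L) * w ^ 2) =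
      (1 - 1 / (2 * L)) * (∫ w in -(1 / 2 : ℝ)..(1 / 2), Real.exp (-(4 * L) * w ^ 2)) +
        Real.exp (-L) / (2 * L) := by
  have hd : ∀ w ∈ Set.uIcc (-(1 / 2 : ℝ)) (1 / 2),
      HasDerivAt (fun w : ℝ => w * Real.exp (-(4 * L) * w ^ 2))
        ((1 - 8 * L * w ^ 2) * Real.exp (-(4 * L) * w ^ 2)) w := by
    intro w _
    have := (hasDerivAt_id w).mul (((hasDerivAt_pow 2 w).const_mul (-(4 * L))).exp)
    convert! this using 1
    simp
    ring
  have h := intervalIntegral.integral_eq_sub_of_hasDerivAt hd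
    (Continuous.intervalIntegrable (by fun_prop) _ _)
  have h2 : (1 / 2 : ℝ) * Real.exp (-(4 * L) * (1 / 2) ^ 2) -
      -(1 / 2) * Real.exp (-(4 * L) * (-(1 / 2)) ^ 2) = Real.exp (-L) := by
    ring_nf
  rw [h2] at h
  rw [← h, ← intervalIntegral.integral_const_mul, ← intervalIntegral.integral_div,
    ← intervalIntegral.integral_add (Continuous.intervalIntegrable (by fun_prop) _ _)
      (Continuous.intervalIntegrable (by fun_prop) _ _)]
  congr 1
  ext w
  field_simp
  ring

lemma abs_integral_one_sub_mul_exp_sub_le {L : ℝ} (hL : 1 ≤ L) :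
    |(∫ w in -(1 / 2 : ℝ)..(1 / 2), (1 - 4 * w ^ 2) * Real.exp (-(4 * L) * w ^ 2)) -
      (1 - 1 / (2 * L)) * √(Real.pi / (4 * L))| ≤ 4 * Real.exp (-L) := by
  rw [integral_one_sub_mul_exp_eq (by linarith)]
  have h := abs_integral_exp_sub_sqrt_le hL
  set E := ∫ w in -(1 / 2 : ℝ)..(1 / 2), Real.exp (-(4 * L) * w ^ 2)
  have h1 : 0 < 1 / (2 * L) := by positivity
  have h2 : 1 / (2 * L) ≤ 1 := by rw [div_le_one (by linarith)]; linarith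
  have h3 : Real.exp (1 - L) ≤ 3 * Real.exp (-L) := by
    rw [sub_eq_add_neg, Real.exp_add]
    gcongr
    linarith [Real.exp_one_lt_d9]
  have h4 : Real.exp (-L) / (2 * L) ≤ Real.exp (-L) := by
    apply div_le_self (Real.exp_pos _).le; linarith
  calc _ = |(1 - 1 / (2 * L)) * (E - √(Real.pi / (4 * L))) + Real.exp (-L) / (2 * L)| := by
        congr 1; ring
    _ ≤ |(1 - 1 / (2 * L)) * (E - √(Real.pi / (4 * L)))| + |Real.exp (-L) / (2 * L)| :=
        abs_add_le _ _
    _ = (1 - 1 / (2 * L)) * |E - √(Real.pi / (4 * L))| + Real.exp (-L) / (2 * L) := by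
        rw [abs_mul, abs_of_nonneg (by linarith : 0 ≤ 1 - 1 / (2 * L)),
          abs_of_nonneg (by positivity : 0 ≤ Real.exp (-L) / (2 * L))]
    _ ≤ 1 * Real.exp (1 - L) + Real.exp (-L) := by
        gcongr
        linarith
    _ ≤ _ := by linarith

end Gaussian

section PartitionAsymptotics
open Complex

lemma re_integral_central_eq {A N σ : ℝ} (hσ : 0 < σ) (hn : N * σ ^ 2 = A) :
    (∫ y in -(σ * (√3 / 2))..(σ * (√3 / 2)),
      (((σ / 2 : ℝ) + (y : ℝ) * I) / (2 * Real.pi)) ^ (1 / 2 : ℂ) *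
        exp ((A : ℝ) / ((σ / 2 : ℝ) + (y : ℝ) * I) + (N : ℝ) * ((σ / 2 : ℝ) + (y : ℝ) * I))).re =
      σ * √(σ / (2 * Real.pi)) * (2 * Real.exp (2 * (A / σ)) *
        ∫ w in -(1 / 2 : ℝ)..(1 / 2), (1 - 4 * w ^ 2) * Real.exp (-(4 * (A / σ)) * w ^ 2)) := by
  have hpi := Real.pi_pos
  rw [← re_integral_segment_eq, ← re_ofReal_mul]
  congr 1
  rw [← mul_neg, ← intervalIntegral.smul_integral_comp_mul_left, real_smul, ofReal_mul, mul_assoc,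
    ← intervalIntegral.integral_const_mul]
  rw [← intervalIntegral.integral_const_mul, ← intervalIntegral.integral_const_mul]
  refine intervalIntegral.integral_congr fun t _ => ?_
  congr 1
  have hz : ((1 / 2 : ℝ) + (t : ℝ) * I : ℂ) ≠ 0 := fun h => by
    have := congrArg re h
    simp at this
  have hσ' : (σ : ℂ) ≠ 0 := by exact_mod_cast hσ.ne'
  set z : ℂ := (1 / 2 : ℝ) + (t : ℝ) * I with hzd
  have h1 : ((σ / 2 : ℝ) + ((σ * t : ℝ) : ℝ) * I : ℂ) = σ * z := by
    rw [hzd]; push_cast; ring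
  have h2 : σ * z / (2 * Real.pi) = ((σ / (2 * Real.pi) : ℝ) : ℂ) * z := by
    push_cast; ring
  rw [h1, h2, ofReal_mul_cpow_half (by positivity) hz, mul_assoc]
  congr 3
  rw [← hn]
  push_cast
  field_simp

/-- The main term of the circle method for the partition function, up to a relative error that is
exponentially small in `√n`. -/
lemma exists_abs_card_partition_sub_le :
    ∃ C > 0, ∃ σ₀ > 0, ∀ (n : ℕ) (σ : ℝ), 0 < σ → σ ≤ σ₀ →
    ((n : ℝ) - 1 / 24) * σ ^ 2 = Real.pi ^ 2 / 6 →
    |2 * Real.pi * (Fintype.card (Nat.Partition n) : ℝ) -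
      σ ^ 2 / √(Real.pi ^ 2 / 3) * Real.exp (2 * (Real.pi ^ 2 / 6 / σ)) *
        (1 - 1 / (2 * (Real.pi ^ 2 / 6 / σ)))| ≤
      C * Real.exp (19 / 10 * (Real.pi ^ 2 / 6 / σ)) := by
  obtain ⟨C, hC, σ₀, hσ₀, h⟩ := exists_norm_card_partition_sub_integral_le
  refine ⟨C + 8, by positivity, min σ₀ 1, by positivity, ?_⟩
  intro n σ hσ hσ1 hn
  have hσa : σ ≤ σ₀ := hσ1.trans (min_le_left _ _)
  have hσb : σ ≤ 1 := hσ1.trans (min_le_right _ _)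
  have hpi := Real.pi_gt_three
  have h3 : √3 ^ 2 = 3 := Real.sq_sqrt (by norm_num)
  have hc := h n σ (σ * (√3 / 2)) hσ hσa hn (by positivity) (by linear_combination σ ^ 2 / 4 * h3)
  have hc' := (abs_re_le_norm _).trans hc
  rw [sub_re, re_integral_central_eq hσ hn] at hc'
  have hre : (2 * Real.pi * (Fintype.card (Nat.Partition n) : ℂ)).re =
      2 * Real.pi * (Fintype.card (Nat.Partition n) : ℝ) := by
    simp
  rw [hre] at hc'
  set L := Real.pi ^ 2 / 6 / σ with hL
  have hL1 : 1 ≤ L := by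
    rw [hL, le_div_iff₀ hσ]; nlinarith
  set J := ∫ w in -(1 / 2 : ℝ)..(1 / 2), (1 - 4 * w ^ 2) * Real.exp (-(4 * L) * w ^ 2)
  have hJ : |J - (1 - 1 / (2 * L)) * √(Real.pi / (4 * L))| ≤ 4 * Real.exp (-L) :=
    abs_integral_one_sub_mul_exp_sub_le hL1
  have hroot : √(σ / (2 * Real.pi)) * √(Real.pi / (4 * L)) * 2 = σ / √(Real.pi ^ 2 / 3) := by
    have h4 : (2 : ℝ) = √4 := by
      rw [show (4 : ℝ) = 2 ^ 2 by norm_num, Real.sqrt_sq (by norm_num)]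
    have h5 : σ = √(σ ^ 2) := (Real.sqrt_sq hσ.le).symm
    rw [← Real.sqrt_mul (by positivity), mul_comm]
    conv_lhs => rw [h4]
    conv_rhs => rw [h5]
    rw [← Real.sqrt_mul (by norm_num), ← Real.sqrt_div (by positivity)]
    congr 1
    rw [hL]
    field_simp
    norm_num
  have hs1 : √(σ / (2 * Real.pi)) ≤ 1 := by
    rw [Real.sqrt_le_one, div_le_one (by positivity)]
    linarith
  have hmain : σ ^ 2 / √(Real.pi ^ 2 / 3) * Real.exp (2 * L) * (1 - 1 / (2 * L)) =
      σ * √(σ / (2 * Real.pi)) * (2 * Real.exp (2 * L) *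
        ((1 - 1 / (2 * L)) * √(Real.pi / (4 * L)))) := by
    linear_combination (-σ * Real.exp (2 * L) * (1 - 1 / (2 * L))) * hroot
  have herr : |σ * √(σ / (2 * Real.pi)) * (2 * Real.exp (2 * L) * J) -
      σ ^ 2 / √(Real.pi ^ 2 / 3) * Real.exp (2 * L) * (1 - 1 / (2 * L))| ≤
      8 * Real.exp (19 / 10 * L) := by
    rw [hmain, ← mul_sub, ← mul_sub, abs_mul,
      abs_of_nonneg (by positivity : 0 ≤ σ * √(σ / (2 * Real.pi))), abs_mul,
      abs_of_nonneg (by positivity : 0 ≤ 2 * Real.exp (2 * L))]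
    calc _ ≤ 1 * 1 * (2 * Real.exp (2 * L) * (4 * Real.exp (-L))) := by gcongr
      _ = 8 * Real.exp L := by
        rw [show L = 2 * L + -L by ring, Real.exp_add]; ring_nf
      _ ≤ _ := by gcongr; linarith
  calc _ ≤ _ := abs_sub_le _ (σ * √(σ / (2 * Real.pi)) * (2 * Real.exp (2 * L) * J)) _
    _ ≤ _ := add_le_add hc' herr
    _ = _ := by ring

end PartitionAsymptotics

section FiniteDifferences
open fwdDiff

lemma le_fwdDiff_iter_of_le_deriv (r : ℕ) (f : ℕ → ℝ → ℝ) {x m : ℝ} (hx : 0 < x)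
    (hf : ∀ j < r, ∀ t > 0, HasDerivAt (f j) (f (j + 1) t) t)
    (hm : ∀ t ∈ Set.Icc x (x + r), m ≤ f r t) : m ≤ Δ_[1] ^[r] (f 0) x := by
  induction r generalizing f with
  | zero => simpa using hm x (by simp)
  | succ r ih =>
    rw [Function.iterate_succ_apply]
    refine ih (fun j => Δ_[1] (f j)) ?_ ?_
    · intro j hj t ht
      have h1 := (hf j (by omega) (t + 1) (by linarith)).comp_add_const t 1
      exact h1.sub (hf j (by omega) t ht)
    · intro t ht
      push_cast at hm
      have ht0 : 0 < t := hx.trans_le ht.1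
      obtain ⟨ξ, hξ, he⟩ := exists_hasDerivAt_eq_slope (f r) (f (r + 1)) (lt_add_one t)
        (fun s hs => (hf r (by omega) s (ht0.trans_le hs.1)).continuousAt.continuousWithinAt)
        (fun s hs => hf r (by omega) s (ht0.trans hs.1))
      rw [add_sub_cancel_left, div_one] at he
      rw [fwdDiff, ← he]
      exact hm ξ ⟨ht.1.trans hξ.1.le, by linarith [hξ.2, ht.2]⟩

lemma abs_fwdDiff_iter_le (r : ℕ) (u : ℕ → ℝ) (n : ℕ) {M : ℝ} (hM : ∀ m ≥ n, |u m| ≤ M) :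
    |Δ_[1] ^[r] u n| ≤ 2 ^ r * M := by
  induction r generalizing n with
  | zero => simpa using hM n le_rfl
  | succ r ih =>
    rw [Function.iterate_succ_apply', fwdDiff]
    have h1 := ih n hM
    have h2 := ih (n + 1) fun m hm => hM m (by omega)
    calc _ ≤ _ := abs_sub _ _
      _ ≤ _ := add_le_add h2 h1
      _ = _ := by ring

lemma fwdDiff_iter_comp_cast_sub (r : ℕ) (f : ℝ → ℝ) (a : ℝ) (n : ℕ) :
    Δ_[1] ^[r] (fun m : ℕ => f (m - a)) n = Δ_[1] ^[r] f (n - a) := by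
  induction r generalizing n with
  | zero => rfl
  | succ r ih =>
    rw [Function.iterate_succ_apply', Function.iterate_succ_apply', fwdDiff, fwdDiff, ih, ih]
    push_cast
    ring_nf

/-- The `j`-th derivative of `∑ i < m, c i * y ^ (-(i + 1) / 2)`. -/
noncomputable def halfPowSumDeriv (m : ℕ) (c : ℕ → ℝ) (j : ℕ) (y : ℝ) : ℝ :=
  ∑ i ∈ Finset.range m, c i * (∏ l ∈ Finset.range j, (-((i : ℝ) + 1) / 2 - l)) *
    y ^ (-((i : ℝ) + 1) / 2 - j)

lemma hasDerivAt_halfPowSumDeriv (m : ℕ) (c : ℕ → ℝ) (j : ℕ) {y : ℝ} (hy : 0 < y) :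
    HasDerivAt (halfPowSumDeriv m c j) (halfPowSumDeriv m c (j + 1) y) y := by
  unfold halfPowSumDeriv
  refine HasDerivAt.fun_sum fun i _ => ?_
  have h := (Real.hasDerivAt_rpow_const (x := y) (p := -((i : ℝ) + 1) / 2 - j)
    (Or.inl hy.ne')).const_mul (c i * (∏ l ∈ Finset.range j, (-((i : ℝ) + 1) / 2 - l)))
  convert! h using 1
  rw [Finset.prod_range_succ]
  push_cast
  rw [sub_sub]
  ring

lemma neg_one_pow_mul_prod_pos (j : ℕ) :
    0 < (-1 : ℝ) ^ j * ∏ l ∈ Finset.range j, (-((0 : ℝ) + 1) / 2 - l) := by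
  induction j with
  | zero => simp
  | succ j ih =>
    rw [Finset.prod_range_succ, pow_succ]
    have : (0 : ℝ) < 1 / 2 + j := by positivity
    calc (0 : ℝ) < ((-1 : ℝ) ^ j * ∏ l ∈ Finset.range j, (-((0 : ℝ) + 1) / 2 - l)) * (1 / 2 + j) :=
          mul_pos ih this
      _ = _ := by ring

lemma exists_le_halfPowSumDeriv (m : ℕ) (c : ℕ → ℝ) (hc : 0 < c 0) (j : ℕ) :
    ∃ κ > 0, ∀ᶠ y in atTop, κ * y ^ (-(1 / 2 : ℝ) - j) ≤
      (-1 : ℝ) ^ j * halfPowSumDeriv (m + 1) c j y := by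
  set κ := (-1 : ℝ) ^ j * ∏ l ∈ Finset.range j, (-((0 : ℝ) + 1) / 2 - l) with hκ
  have hκ0 : 0 < κ := neg_one_pow_mul_prod_pos j
  set d : ℕ → ℝ := fun i =>
    (-1 : ℝ) ^ j * (c i * ∏ l ∈ Finset.range j, (-((i : ℝ) + 1) / 2 - l)) with hd
  have hd0 : d 0 = c 0 * κ := by simp only [hd, hκ, Nat.cast_zero]; ring
  have hpos : 0 < c 0 * κ := mul_pos hc hκ0
  have hlim : Tendsto (fun y : ℝ => ∑ i ∈ Finset.range m, d (i + 1) * y ^ (-((i : ℝ) + 1) / 2))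
      atTop (𝓝 (∑ i ∈ Finset.range m, d (i + 1) * 0)) := by
    refine tendsto_finsetSum _ fun i _ => Tendsto.const_mul _ ?_
    have := tendsto_rpow_neg_atTop (y := ((i : ℝ) + 1) / 2) (by positivity)
    simpa only [neg_div] using this
  simp only [mul_zero, Finset.sum_const_zero] at hlim
  refine ⟨c 0 * κ / 2, by positivity, ?_⟩
  filter_upwards [hlim.eventually (lt_mem_nhds (show -(c 0 * κ / 2) < 0 by linarith)),
    eventually_gt_atTop 0] with y hy hy0
  have hfac : (-1 : ℝ) ^ j * halfPowSumDeriv (m + 1) c j y =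
      (∑ i ∈ Finset.range m, d (i + 1) * y ^ (-((i : ℝ) + 1) / 2) + d 0) *
        y ^ (-(1 / 2 : ℝ) - j) := by
    rw [halfPowSumDeriv, Finset.sum_range_succ', mul_add, add_mul, Finset.mul_sum, Finset.sum_mul]
    congr 1
    · refine Finset.sum_congr rfl fun i _ => ?_
      rw [mul_assoc (d (i + 1)), ← Real.rpow_add hy0]
      simp only [hd]
      push_cast
      ring_nf
    · simp only [hd, Nat.cast_zero]
      ring_nf
  rw [hfac, hd0]
  gcongr
  linarith

/-- If a sequence is, up to `O(n ^ (-(j + 1)))`, a sampled function whose derivative is a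
combination of half-integral powers with positive leading coefficient at `y ^ (-1/2)`, then its
differences of order `j + 1` eventually have the sign `(-1) ^ j`. -/
lemma eventually_pos_fwdDiff_iter (u : ℕ → ℝ) (h : ℝ → ℝ) (m : ℕ) (c : ℕ → ℝ) (hc : 0 < c 0)
    (a C : ℝ) (j : ℕ) (hh : ∀ y > 0, HasDerivAt h (halfPowSumDeriv (m + 1) c 0 y) y)
    (hu : ∀ᶠ n : ℕ in atTop, |u n - h (n - a)| ≤ C * ((n : ℝ) - a) ^ (-((j : ℝ) + 1))) :
    ∀ᶠ n : ℕ in atTop, 0 < (-1 : ℝ) ^ j * Δ_[1] ^[j + 1] u n := by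
  obtain ⟨κ, hκ, hlow⟩ := exists_le_halfPowSumDeriv m c hc j
  obtain ⟨Y, hY⟩ := eventually_atTop.1 hlow
  obtain ⟨n₀, hn₀⟩ := eventually_atTop.1 hu
  have hnat : Tendsto (fun n : ℕ => (n : ℝ) - a) atTop atTop :=
    tendsto_atTop_add_const_right _ _ tendsto_natCast_atTop_atTop
  have hlim : Tendsto (fun n : ℕ => κ * 2 ^ (-(1 / 2 : ℝ) - j) * ((n : ℝ) - a) ^ (1 / 2 : ℝ))
      atTop atTop :=
    ((tendsto_rpow_atTop (by norm_num)).comp hnat).const_mul_atTop (by positivity)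
  filter_upwards [eventually_ge_atTop n₀, hnat.eventually_ge_atTop Y,
    hnat.eventually_ge_atTop (j + 1 : ℝ), hlim.eventually_gt_atTop (2 ^ (j + 1) * |C|)]
    with n h1 h2 h3 h4
  set y : ℝ := n - a with hy
  have hy0 : 0 < y := by
    have : (0 : ℝ) ≤ j := j.cast_nonneg
    linarith
  have hdiff : κ * 2 ^ (-(1 / 2 : ℝ) - j) * y ^ (-(1 / 2 : ℝ) - j) ≤
      (-1 : ℝ) ^ j * Δ_[1] ^[j + 1] h y := by
    have hk := le_fwdDiff_iter_of_le_deriv (j + 1)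
      (fun k => (-1 : ℝ) ^ j • Nat.casesOn k h (halfPowSumDeriv (m + 1) c)) (x := y)
      (m := κ * 2 ^ (-(1 / 2 : ℝ) - j) * y ^ (-(1 / 2 : ℝ) - j)) hy0 ?_ ?_
    · rw [fwdDiff_iter_const_smul] at hk
      simpa using hk
    · intro k _ t ht
      cases k with
      | zero => exact (hh t ht).const_smul _
      | succ k => exact (hasDerivAt_halfPowSumDeriv (m + 1) c k ht).const_smul _
    · intro t ht
      push_cast at ht
      have ht0 : 0 < t := hy0.trans_le ht.1
      refine le_trans ?_ (hY t (h2.trans ht.1))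
      rw [mul_assoc, ← Real.mul_rpow (by norm_num) hy0.le]
      refine mul_le_mul_of_nonneg_left ?_ hκ.le
      refine Real.rpow_le_rpow_of_nonpos ht0 (by linarith [ht.2]) ?_
      have : (0 : ℝ) ≤ j := j.cast_nonneg
      linarith
  have herr : |Δ_[1] ^[j + 1] (fun k : ℕ => u k - h (k - a)) n| ≤
      2 ^ (j + 1) * (|C| * y ^ (-((j : ℝ) + 1))) := by
    refine abs_fwdDiff_iter_le _ _ _ fun k hk => (hn₀ k (h1.trans hk)).trans ?_
    have hyk : y ≤ k - a := by
      have : (n : ℝ) ≤ k := by exact_mod_cast hk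
      linarith
    have hyk0 : 0 < (k : ℝ) - a := hy0.trans_le hyk
    refine mul_le_mul (le_abs_self C) ?_ (by positivity) (abs_nonneg C)
    refine Real.rpow_le_rpow_of_nonpos hy0 hyk ?_
    have : (0 : ℝ) ≤ j := j.cast_nonneg
    linarith
  have hsplit : Δ_[1] ^[j + 1] u n = Δ_[1] ^[j + 1] h y +
      Δ_[1] ^[j + 1] (fun k : ℕ => u k - h (k - a)) n := by
    rw [hy, ← fwdDiff_iter_comp_cast_sub, ← Pi.add_apply, ← fwdDiff_iter_add]
    refine congrArg (fun v : ℕ → ℝ => Δ_[1] ^[j + 1] v n) (funext fun k => ?_)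
    simp
  have hpow : y ^ (-(1 / 2 : ℝ) - j) = y ^ (1 / 2 : ℝ) * y ^ (-((j : ℝ) + 1)) := by
    rw [← Real.rpow_add hy0]; ring_nf
  have hyp : 0 < y ^ (-((j : ℝ) + 1)) := by positivity
  have h5 := mul_lt_mul_of_pos_right h4 hyp
  have h6 : -|Δ_[1] ^[j + 1] (fun k : ℕ => u k - h (k - a)) n| ≤
      (-1 : ℝ) ^ j * Δ_[1] ^[j + 1] (fun k : ℕ => u k - h (k - a)) n := by
    have := neg_abs_le ((-1 : ℝ) ^ j * Δ_[1] ^[j + 1] (fun k : ℕ => u k - h (k - a)) n)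
    rwa [abs_mul, abs_pow, abs_neg, abs_one, one_pow, one_mul] at this
  rw [hsplit, mul_add]
  rw [hpow] at hdiff
  linarith

end FiniteDifferences

section LogAsymptotics

lemma abs_log_sub_log_le {x M : ℝ} (hM : 0 < M) (h : |x - M| ≤ M / 2) :
    |Real.log x - Real.log M| ≤ 2 * (|x - M| / M) := by
  have hε : |1 - x / M| = |x - M| / M := by
    rw [abs_sub_comm, ← abs_of_pos hM, ← abs_div, abs_of_pos hM, sub_div, div_self hM.ne']
  have hε2 : |1 - x / M| ≤ 1 / 2 := by
    rw [hε, div_le_iff₀ hM]; linarith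
  have hx : 0 < x := by
    rw [abs_le] at h; linarith [h.1]
  have h1 := Real.abs_log_sub_add_sum_range_le (x := 1 - x / M) (by linarith) 0
  simp only [Finset.range_zero, Finset.sum_empty, zero_add, pow_one, sub_sub_cancel] at h1
  rw [← Real.log_div hx.ne' hM.ne']
  refine h1.trans ?_
  rw [hε] at hε2 ⊢
  rw [div_le_iff₀ (by linarith)]
  have : 0 ≤ |x - M| / M := by positivity
  nlinarith

lemma exists_abs_log_card_partition_sub_le :
    ∃ c₀ C : ℝ, 0 < C ∧ ∀ᶠ n : ℕ in atTop,
      (C * (((n : ℝ) - 1 / 24) * Real.exp (-(√(Real.pi ^ 2 / 6) / 10) * √((n : ℝ) - 1 / 24))) ≤ 1 →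
      |Real.log (Fintype.card (Nat.Partition n)) -
        (c₀ + 2 * √(Real.pi ^ 2 / 6) * √((n : ℝ) - 1 / 24) - Real.log ((n : ℝ) - 1 / 24) +
          Real.log (1 - 1 / (2 * √(Real.pi ^ 2 / 6)) * (√((n : ℝ) - 1 / 24))⁻¹))| ≤
      C * (((n : ℝ) - 1 / 24) * Real.exp (-(√(Real.pi ^ 2 / 6) / 10) * √((n : ℝ) - 1 / 24)))) := by
  obtain ⟨C, hC, σ₀, hσ₀, h⟩ := exists_abs_card_partition_sub_le
  have hpi := Real.pi_pos
  set A := Real.pi ^ 2 / 6 with hA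
  have hA0 : 0 < A := by positivity
  set B := A / √(Real.pi ^ 2 / 3) with hB
  have hB0 : 0 < B := by positivity
  have hnat : Tendsto (fun n : ℕ => (n : ℝ) - 1 / 24) atTop atTop :=
    tendsto_atTop_add_const_right _ _ tendsto_natCast_atTop_atTop
  have hsq : Tendsto (fun n : ℕ => √((n : ℝ) - 1 / 24)) atTop atTop :=
    Real.tendsto_sqrt_atTop.comp hnat
  refine ⟨Real.log (B / (2 * Real.pi)), 4 * C / B, by positivity, ?_⟩
  filter_upwards [hsq.eventually_ge_atTop (√A / σ₀), hsq.eventually_ge_atTop (1 / √A),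
    hnat.eventually_gt_atTop 0] with n h1 h2 hy0
  intro hsmall
  set y := (n : ℝ) - 1 / 24 with hy
  have hsy : 0 < √y := Real.sqrt_pos.2 hy0
  have hsA : 0 < √A := Real.sqrt_pos.2 hA0
  have hAA : √A ^ 2 = A := Real.sq_sqrt hA0.le
  have hyy : √y ^ 2 = y := Real.sq_sqrt hy0.le
  have hL : A / (√A / √y) = √A * √y := by
    field_simp; linarith
  have hL1 : 1 ≤ √A * √y := by
    rw [div_le_iff₀ hsA] at h2; linarith
  have hp := h n (√A / √y) (by positivity) (by
    rw [div_le_iff₀ hσ₀] at h1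
    rw [div_le_iff₀ hsy]; linarith) (by
    rw [div_pow, hAA, hyy, ← hy]; field_simp)
  rw [hL, div_pow, hAA, hyy] at hp
  set L := √A * √y with hLd
  set M := A / y / √(Real.pi ^ 2 / 3) * Real.exp (2 * L) * (1 - 1 / (2 * L)) with hM
  have hMB : M = B / y * Real.exp (2 * L) * (1 - 1 / (2 * L)) := by
    rw [hM, hB]; ring
  have hu : 1 / (2 * L) ≤ 1 / 2 := by
    gcongr; linarith
  have hu' : 1 / 2 ≤ 1 - 1 / (2 * L) := by linarith
  have hM0 : 0 < M := by rw [hMB]; positivity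
  have hMlow : B / y * Real.exp (2 * L) / 2 ≤ M := by
    rw [hMB]
    have : 0 < B / y * Real.exp (2 * L) := by positivity
    nlinarith
  have hexp : Real.exp (19 / 10 * L) = Real.exp (2 * L) * Real.exp (-(√A / 10) * √y) := by
    rw [← Real.exp_add, hLd]; ring_nf
  have hrel : 2 * (|2 * Real.pi * (Fintype.card (Nat.Partition n) : ℝ) - M| / M) ≤
      4 * C / B * (y * Real.exp (-(√A / 10) * √y)) := by
    rw [mul_div_assoc', div_le_iff₀ hM0]
    calc _ ≤ 2 * (C * Real.exp (19 / 10 * L)) := by gcongr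
      _ = 4 * C / B * (y * Real.exp (-(√A / 10) * √y)) * (B / y * Real.exp (2 * L) / 2) := by
        rw [hexp]; field_simp; ring
      _ ≤ _ := by gcongr
  have hhalf : |2 * Real.pi * (Fintype.card (Nat.Partition n) : ℝ) - M| ≤ M / 2 := by
    have h3 := hrel.trans hsmall
    rw [mul_div_assoc', div_le_one hM0] at h3
    linarith
  have hlog := (abs_log_sub_log_le hM0 hhalf).trans hrel
  have hcard : (Fintype.card (Nat.Partition n) : ℝ) ≠ 0 := by
    have : 0 < Fintype.card (Nat.Partition n) := Fintype.card_pos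
    positivity
  have hid : 1 / (2 * √A) * (√y)⁻¹ = 1 / (2 * L) := by
    rw [hLd]; field_simp
  have hlogM : Real.log M = Real.log B - Real.log y + 2 * L + Real.log (1 - 1 / (2 * L)) := by
    rw [hMB, Real.log_mul (by positivity) (by linarith), Real.log_mul (by positivity)
      (Real.exp_pos _).ne', Real.log_exp, Real.log_div hB0.ne' hy0.ne']
  rw [Real.log_mul (by positivity) hcard, hlogM] at hlog
  rw [Real.log_div hB0.ne' (by positivity), hid]
  convert! hlog using 2
  rw [hLd]; ring

lemma eventually_mul_exp_neg_mul_sqrt_le {b : ℝ} (hb : 0 < b) (j : ℕ) :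
    ∀ᶠ y : ℝ in atTop, y * Real.exp (-b * √y) ≤ y ^ (-((j : ℝ) + 1)) := by
  have h := (isLittleO_exp_neg_mul_rpow_atTop hb (-(2 * ((j : ℝ) + 2)))).comp_tendsto
    Real.tendsto_sqrt_atTop
  filter_upwards [h.bound one_pos, eventually_gt_atTop 0] with y hy hy0
  simp only [Function.comp, one_mul, Real.norm_eq_abs, Real.abs_exp] at hy
  rw [abs_of_nonneg (by positivity), Real.sqrt_eq_rpow, ← Real.rpow_mul hy0.le,
    ← Real.sqrt_eq_rpow] at hy
  calc _ ≤ y * y ^ (1 / 2 * (-(2 * ((j : ℝ) + 2)))) := by gcongr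
    _ = y ^ (1 : ℝ) * y ^ (1 / 2 * (-(2 * ((j : ℝ) + 2)))) := by rw [Real.rpow_one]
    _ = _ := by rw [← Real.rpow_add hy0]; ring_nf

/-- A smooth approximation to `log p(n)` at `y = n - 1 / 24`. -/
noncomputable def logPartitionApprox (c₀ s : ℝ) (K : ℕ) (y : ℝ) : ℝ :=
  c₀ + 2 * s * y ^ (1 / 2 : ℝ) - Real.log y -
    ∑ i ∈ Finset.range K, (1 / (2 * s)) ^ (i + 1) / ((i : ℝ) + 1) * y ^ (-((i : ℝ) + 1) / 2)

/-- Coefficients of the derivative of `logPartitionApprox`. -/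
noncomputable def logPartitionCoeff (s : ℝ) : ℕ → ℝ
  | 0 => s
  | 1 => -1
  | i + 2 => (1 / (2 * s)) ^ (i + 1) / 2

lemma hasDerivAt_logPartitionApprox (c₀ s : ℝ) (K : ℕ) {y : ℝ} (hy : 0 < y) :
    HasDerivAt (logPartitionApprox c₀ s K)
      (halfPowSumDeriv (K + 2) (logPartitionCoeff s) 0 y) y := by
  have h1 := ((Real.hasDerivAt_rpow_const (x := y) (p := 1 / 2) (Or.inl hy.ne')).const_mul
    (2 * s)).const_add c₀
  have h2 := HasDerivAt.fun_sum (u := Finset.range K) fun i _ =>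
    (Real.hasDerivAt_rpow_const (x := y) (p := -((i : ℝ) + 1) / 2) (Or.inl hy.ne')).const_mul
      ((1 / (2 * s)) ^ (i + 1) / ((i : ℝ) + 1))
  have h := (h1.sub (Real.hasDerivAt_log hy.ne')).sub h2
  convert! h using 1
  rw [halfPowSumDeriv, Finset.sum_range_succ', Finset.sum_range_succ', add_assoc, add_comm,
    sub_eq_add_neg (_ - _), ← Finset.sum_neg_distrib]
  congr 1
  · simp only [logPartitionCoeff, Finset.range_zero, Finset.prod_empty]
    rw [← Real.rpow_neg_one y]
    norm_num
    ring
  · refine Finset.sum_congr rfl fun i _ => ?_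
    have hi : (i : ℝ) + 1 ≠ 0 := by positivity
    have he : -((i : ℝ) + 1) / 2 - 1 = -(((i + 1 + 1 : ℕ) : ℝ) + 1) / 2 - (0 : ℕ) := by
      push_cast; ring
    simp only [logPartitionCoeff, Finset.range_zero, Finset.prod_empty]
    rw [he]
    field_simp

lemma abs_log_one_sub_add_sum_le {a y : ℝ} (ha : 0 < a) (hy : 0 < y) (h : 2 * a ≤ √y) (j : ℕ) :
    |Real.log (1 - a * (√y)⁻¹) +
      ∑ i ∈ Finset.range (2 * j + 1), a ^ (i + 1) / ((i : ℝ) + 1) * y ^ (-((i : ℝ) + 1) / 2)| ≤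
      2 * a ^ (2 * j + 2) * y ^ (-((j : ℝ) + 1)) := by
  have hsy : 0 < √y := Real.sqrt_pos.2 hy
  have hpow : ∀ k : ℕ, (a * (√y)⁻¹) ^ k = a ^ k * y ^ (-(k : ℝ) / 2) := fun k => by
    rw [mul_pow, Real.sqrt_eq_rpow, ← Real.rpow_neg hy.le, ← Real.rpow_mul_natCast hy.le]
    ring_nf
  have hu0 : 0 < a * (√y)⁻¹ := by positivity
  have hu : a * (√y)⁻¹ ≤ 1 / 2 := by
    rw [← div_eq_mul_inv, div_le_iff₀ hsy]; linarith
  have hlog := Real.abs_log_sub_add_sum_range_le (x := a * (√y)⁻¹)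
    (by rw [abs_of_pos hu0]; linarith) (2 * j + 1)
  rw [abs_of_pos hu0] at hlog
  have hsum : ∑ i ∈ Finset.range (2 * j + 1), (a * (√y)⁻¹) ^ (i + 1) / ((i : ℝ) + 1) =
      ∑ i ∈ Finset.range (2 * j + 1), a ^ (i + 1) / ((i : ℝ) + 1) * y ^ (-((i : ℝ) + 1) / 2) := by
    refine Finset.sum_congr rfl fun i _ => ?_
    rw [hpow]; push_cast; ring
  rw [hsum, add_comm] at hlog
  refine hlog.trans ?_
  rw [div_le_iff₀ (by linarith), hpow]
  have he : -((2 * j + 1 + 1 : ℕ) : ℝ) / 2 = -((j : ℝ) + 1) := by push_cast; ring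
  rw [he]
  have : 0 < a ^ (2 * j + 1 + 1) * y ^ (-((j : ℝ) + 1)) := by positivity
  nlinarith

lemma exists_abs_log_card_partition_sub_approx_le (j : ℕ) :
    ∃ c₀ C : ℝ, ∀ᶠ n : ℕ in atTop, |Real.log (Fintype.card (Nat.Partition n)) -
      logPartitionApprox c₀ √(Real.pi ^ 2 / 6) (2 * j + 1) ((n : ℝ) - 1 / 24)| ≤
        C * ((n : ℝ) - 1 / 24) ^ (-((j : ℝ) + 1)) := by
  obtain ⟨c₀, C, hC, h⟩ := exists_abs_log_card_partition_sub_le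
  have hpi := Real.pi_pos
  set s := √(Real.pi ^ 2 / 6) with hs
  have hs0 : 0 < s := Real.sqrt_pos.2 (by positivity)
  have hnat : Tendsto (fun n : ℕ => (n : ℝ) - 1 / 24) atTop atTop :=
    tendsto_atTop_add_const_right _ _ tendsto_natCast_atTop_atTop
  have hexp := hnat.eventually (eventually_mul_exp_neg_mul_sqrt_le (b := s / 10) (by positivity) j)
  have hzero := (((tendsto_rpow_neg_atTop (y := (j : ℝ) + 1) (by positivity)).comp
    hnat).const_mul C).eventually (gt_mem_nhds (show C * 0 < 1 by simp))
  refine ⟨c₀, C + 2 * (1 / (2 * s)) ^ (2 * j + 2), ?_⟩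
  filter_upwards [h, hexp, hzero, hnat.eventually_gt_atTop 0,
    (Real.tendsto_sqrt_atTop.comp hnat).eventually_ge_atTop (2 * (1 / (2 * s)))]
    with n h1 h2 h3 hy h4
  simp only [Function.comp] at h3 h4
  set y := (n : ℝ) - 1 / 24
  have h5 : C * (y * Real.exp (-(s / 10) * √y)) ≤ C * y ^ (-((j : ℝ) + 1)) := by gcongr
  have h6 := (h1 (h5.trans h3.le)).trans h5
  have h7 := abs_log_one_sub_add_sum_le (a := 1 / (2 * s)) (by positivity) hy h4 j
  have h8 := (abs_add_le _ _).trans (add_le_add h6 h7)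
  rw [add_mul]
  convert! h8 using 2
  rw [logPartitionApprox, Real.sqrt_eq_rpow y]
  ring

end LogAsymptotics

theorem stmt_18 (p : ℕ → ℕ) (hp : ∀ n, p n = Fintype.card (Nat.Partition n))
    (r : ℕ) (hr : 1 ≤ r) :
    ∃ N : ℕ, 0 < N ∧ ∀ n : ℕ, N ≤ n →
      0 < (-1 : ℝ) ^ (r - 1) *
        ((fun g : ℕ → ℝ => fun m => g (m + 1) - g m)^[r] (fun m => Real.log (p m)) n) := by
  obtain ⟨j, rfl⟩ := Nat.exists_eq_add_of_le' hr
  obtain ⟨c₀, C, h⟩ := exists_abs_log_card_partition_sub_approx_le j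
  have hpi := Real.pi_pos
  have hev := eventually_pos_fwdDiff_iter (fun m => Real.log (p m))
    (logPartitionApprox c₀ √(Real.pi ^ 2 / 6) (2 * j + 1)) (2 * j + 2)
    (logPartitionCoeff √(Real.pi ^ 2 / 6)) (Real.sqrt_pos.2 (by positivity)) (1 / 24) C j
    (fun y hy => hasDerivAt_logPartitionApprox c₀ _ (2 * j + 1) hy) (by simpa only [hp] using h)
  obtain ⟨N, hN⟩ := eventually_atTop.1 hev
  exact ⟨N + 1, N.succ_pos, fun n hn => hN n (by omega)⟩
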